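/- Let N ≥ 2, p ∈ (1,∞), and let Ω ⊆ ℝ^N be either the ball B_{R₁}(0) (with R₁ > 0) or the annulus B_{R₁}(0) \ closure(B_{R₀}(0)) (with 0 < R₀ < R₁). Let α, β ∈ ℝ and suppose u : ℝ^N → ℝ is continuous on the closure of Ω, continuously differentiable in Ω, radial (u(x) depends only on ‖x‖), satisfies u = 0 on ∂Ω, the open sets {x ∈ Ω : u(x) > 0} and {x ∈ Ω : u(x) < 0} are both nonempty and connected, and u is a weak solution of the Fučik equation −Δ_p u = α (u⁺)^{p−1} − β (u⁻)^{p−1} in Ω, i.e. ∫_Ω |∇u|^{p−2} ⟨∇u, ∇φ⟩ dx = ∫_Ω (α (u⁺)^{p−1} − β (u⁻)^{p−1}) φ dx for every smooth φ with compact support in Ω, where u⁺ = max{u,0}, u⁻ = max{−u,0}. Then there exist nonempty disjoint open sets Ω₁, Ω₂ ⊆ Ω such that λ₁(p, Ω₁) < α and λ₁(p, Ω₂) < β. -/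

import Mathlib

open MeasureTheory Metric Set Filter
open scoped RealInnerProductSpace ENNReal Topology

/-- The first Dirichlet eigenvalue of the p-Laplacian on `Ω`, defined variationally as the
infimum of Rayleigh quotients of smooth, not identically zero functions with compact
support contained in `Ω`. -/
noncomputable def lam1 {N : ℕ} (p : ℝ) (Ω : Set (EuclideanSpace ℝ (Fin N))) : ℝ :=
  sInf { r : ℝ | ∃ u : EuclideanSpace ℝ (Fin N) → ℝ,
    ContDiff ℝ (⊤ : ℕ∞) u ∧ u ≠ 0 ∧ HasCompactSupport u ∧ tsupport u ⊆ Ω ∧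
    r = (∫ x in Ω, ‖gradient u x‖ ^ p) / (∫ x in Ω, |u x| ^ p) }

/-- The first standard basis vector `e₁` of `ℝ^N`. -/
noncomputable def e1 (N : ℕ) : EuclideanSpace ℝ (Fin N) :=
  (WithLp.equiv 2 (Fin N → ℝ)).symm (fun i => if (i : ℕ) = 0 then 1 else 0)

/-- The eccentric annulus `Ω_s = B_{R₁}(0) \ closure (B_{R₀}(s e₁))`. -/
noncomputable def Om (N : ℕ) (R₀ R₁ s : ℝ) : Set (EuclideanSpace ℝ (Fin N)) :=
  ball 0 R₁ \ closure (ball (s • e1 N) R₀)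

/-- `u` is a first eigenfunction of the p-Laplacian on `Ω` with eigenvalue `lam`:
C¹ on an open set containing the closure of `Ω`, positive in `Ω`, zero on `∂Ω`, and a weak
solution of `−Δ_p u = lam · u^{p−1}`. -/
def IsFirstEigenfunction {N : ℕ} (p : ℝ) (Ω : Set (EuclideanSpace ℝ (Fin N)))
    (lam : ℝ) (u : EuclideanSpace ℝ (Fin N) → ℝ) : Prop :=
  (∃ V : Set (EuclideanSpace ℝ (Fin N)), IsOpen V ∧ closure Ω ⊆ V ∧ ContDiffOn ℝ 1 u V) ∧
  (∀ x ∈ Ω, 0 < u x) ∧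
  (∀ x ∈ frontier Ω, u x = 0) ∧
  (∀ φ : EuclideanSpace ℝ (Fin N) → ℝ, ContDiff ℝ (⊤ : ℕ∞) φ → HasCompactSupport φ →
    tsupport φ ⊆ Ω →
    ∫ x in Ω, ‖gradient u x‖ ^ (p - 2) * ⟪gradient u x, gradient φ x⟫ =
      lam * ∫ x in Ω, (u x) ^ (p - 1) * φ x)

/-
The positive and the negative part of `u` are radial solutions `v` and `w` of `-Δ_p v = α v^(p-1)`
and `-Δ_p w = β w^(p-1)`, supported, up to exchanging them, in `{‖x‖ ≤ a}` and `{a ≤ ‖x‖}`. Polarize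
`w` with respect to the hyperplane bisecting `0` and a small vector `c`: where `x` is closer to `0`
than to `c`, put the larger of the values of `w` at `x` and at its mirror image, elsewhere the
smaller. This preserves the Rayleigh quotient, moves the inner edge of the support out of the ball
of radius `a` about `c`, and does not increase the distance of the support from `0`. By radiality
the result is `max (w x) (w (x - c))` on the near side. The profile of `w` vanishes at both ends, so
it takes equal values at two radii differing by less than `‖c‖`, and there the maximum has a kink;
thus the result is no eigenfunction, and a perturbation at the kink strictly lowers its Rayleigh
quotient. In the annulus `v` is treated in the same way, with the roles of `0` and `c` exchanged; in
the ball it is translated by `c` and dilated.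
-/

open scoped NNReal

theorem rpow_sub_one_mul_self {p x : ℝ} (hp : 1 < p) (hx : 0 ≤ x) : x ^ (p - 1) * x = x ^ p := by
  rw [← Real.rpow_add_one' hx (by linarith), sub_add_cancel]

theorem rpow_add_mul_sub_le_rpow {p x y : ℝ} (hp : 1 < p) (hx : 0 ≤ x) (hy : 0 ≤ y) :
    x ^ p + p * (x ^ (p - 1) * (y - x)) ≤ y ^ p := by
  rcases hx.eq_or_lt with rfl | hx'
  · simp only [Real.zero_rpow (by linarith : p ≠ 0), Real.zero_rpow (by linarith : p - 1 ≠ 0),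
      zero_mul, mul_zero, add_zero]
    exact Real.rpow_nonneg hy p
  · have bernoulli : 1 + p * (y / x - 1) ≤ (1 + (y / x - 1)) ^ p :=
      one_add_mul_self_le_rpow_one_add (by linarith [div_nonneg hy hx]) hp.le
    rw [add_sub_cancel, Real.div_rpow hy hx, le_div_iff₀ (Real.rpow_pos_of_pos hx' p)] at bernoulli
    calc x ^ p + p * (x ^ (p - 1) * (y - x))
        = x ^ (p - 1) * x + p * (x ^ (p - 1) * (y - x)) := by rw [rpow_sub_one_mul_self hp hx]
      _ = (1 + p * (y / x - 1)) * (x ^ (p - 1) * x) := by field_simp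
      _ = (1 + p * (y / x - 1)) * x ^ p := by rw [rpow_sub_one_mul_self hp hx]
      _ ≤ y ^ p := bernoulli

section Flux

variable {E : Type*} [NormedAddCommGroup E] [InnerProductSpace ℝ E] {p : ℝ}

/-- The vector field `g ↦ |g|^{p-2} g`, so that `Δ_p u = div (pFlux p (∇u))`. -/
noncomputable def pFlux (p : ℝ) (g : E) : E := ‖g‖ ^ (p - 2) • g

theorem pFlux_zero (p : ℝ) : pFlux p (0 : E) = 0 := smul_zero _

theorem norm_pFlux (hp : 1 < p) (g : E) : ‖pFlux p g‖ = ‖g‖ ^ (p - 1) := by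
  rw [pFlux, norm_smul, Real.norm_of_nonneg (by positivity),
    ← Real.rpow_add_one' (norm_nonneg g) (by linarith)]
  ring_nf

theorem inner_pFlux_self (hp : 1 < p) (g : E) : ⟪pFlux p g, g⟫ = ‖g‖ ^ p := by
  rw [pFlux, real_inner_smul_left, real_inner_self_eq_norm_sq, ← Real.rpow_natCast,
    ← Real.rpow_add' (norm_nonneg g) (by push_cast; linarith)]
  simp

theorem continuous_pFlux (hp : 1 < p) : Continuous (pFlux p : E → E) := by
  refine continuous_iff_continuousAt.2 fun g => ?_
  rcases eq_or_ne g 0 with rfl | hg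
  · have h : Continuous fun g : E => ‖g‖ ^ (p - 1) :=
      continuous_norm.rpow_const fun _ => Or.inr (by linarith)
    rw [ContinuousAt, pFlux_zero, tendsto_zero_iff_norm_tendsto_zero]
    simpa only [norm_pFlux hp, norm_zero, Real.zero_rpow (by linarith : p - 1 ≠ 0)]
      using h.tendsto 0
  · exact (continuousAt_id.norm.rpow_const (Or.inl (norm_ne_zero_iff.2 hg))).smul continuousAt_id

theorem inner_pFlux_le (hp : 1 < p) (g h : E) : ⟪pFlux p g, h⟫ ≤ ‖g‖ ^ (p - 1) * ‖h‖ :=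
  norm_pFlux hp g ▸ real_inner_le_norm _ _

theorem norm_inner_pFlux_le (hp : 1 < p) {M C : ℝ} {a b : E} (ha : ‖a‖ ≤ M) (hb : ‖b‖ ≤ C) :
    ‖⟪pFlux p a, b⟫‖ ≤ M ^ (p - 1) * C :=
  calc ‖⟪pFlux p a, b⟫‖ ≤ ‖a‖ ^ (p - 1) * ‖b‖ := norm_pFlux hp a ▸ norm_inner_le_norm _ _
    _ ≤ M ^ (p - 1) * C := by
      have hM : 0 ≤ M := (norm_nonneg a).trans ha
      gcongr

theorem inner_pFlux_sub_pos (hp : 1 < p) {a b : E} (hab : a ≠ b) :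
    0 < ⟪pFlux p b - pFlux p a, b - a⟫ := by
  rcases eq_or_ne ‖a‖ ‖b‖ with hn | hn
  · have hb : 0 < ‖b‖ := by
      refine (norm_nonneg b).lt_of_ne fun h0 => hab ?_
      rw [norm_eq_zero.1 h0.symm, norm_eq_zero.1 (hn.trans h0.symm)]
    have hsub : pFlux p b - pFlux p a = ‖b‖ ^ (p - 2) • (b - a) := by
      simp only [pFlux, hn, smul_sub]
    have : 0 < ‖b - a‖ := norm_pos_iff.2 (sub_ne_zero.2 hab.symm)
    rw [hsub, real_inner_smul_left, real_inner_self_eq_norm_sq]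
    positivity
  · have expand : ⟪pFlux p b - pFlux p a, b - a⟫ =
        ‖b‖ ^ p - ⟪pFlux p b, a⟫ - ⟪pFlux p a, b⟫ + ‖a‖ ^ p := by
      rw [inner_sub_left, inner_sub_right, inner_sub_right, inner_pFlux_self hp,
        inner_pFlux_self hp]
      ring
    have key : 0 < (‖b‖ ^ (p - 1) - ‖a‖ ^ (p - 1)) * (‖b‖ - ‖a‖) := by
      have hp' : 0 < p - 1 := by linarith
      rcases hn.lt_or_gt with h | h
      · exact mul_pos (sub_pos.2 (Real.rpow_lt_rpow (norm_nonneg a) h hp')) (sub_pos.2 h)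
      · exact mul_pos_of_neg_of_neg (sub_neg.2 (Real.rpow_lt_rpow (norm_nonneg b) h hp'))
          (sub_neg.2 h)
    rw [expand, ← rpow_sub_one_mul_self hp (norm_nonneg a),
      ← rpow_sub_one_mul_self hp (norm_nonneg b)]
    linarith [inner_pFlux_le hp b a, inner_pFlux_le hp a b]

theorem norm_rpow_sub_le_inner_pFlux (hp : 1 < p) (a b : E) :
    ‖b‖ ^ p - ‖a‖ ^ p ≤ p * ⟪pFlux p b, b - a⟫ := by
  have tangent := rpow_add_mul_sub_le_rpow hp (norm_nonneg b) (norm_nonneg a)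
  have cauchySchwarz := mul_le_mul_of_nonneg_left (inner_pFlux_le hp b a) (by linarith : 0 ≤ p)
  rw [mul_sub, rpow_sub_one_mul_self hp (norm_nonneg b)] at tangent
  rw [inner_sub_right, inner_pFlux_self hp]
  linarith

end Flux

section Gradient

variable {E : Type*} [NormedAddCommGroup E] [InnerProductSpace ℝ E] [CompleteSpace E]
  {f g : E → ℝ} {x : E}

theorem norm_gradient (f : E → ℝ) (x : E) : ‖gradient f x‖ = ‖fderiv ℝ f x‖ := by
  rw [gradient, LinearIsometryEquiv.norm_map]

theorem norm_gradient_le_of_lipschitz {C : ℝ≥0} (hf : LipschitzWith C f) (x : E) :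
    ‖gradient f x‖ ≤ C :=
  norm_gradient f x ▸ norm_fderiv_le_of_lipschitz ℝ hf

theorem measurable_gradient [MeasurableSpace E] [BorelSpace E] (f : E → ℝ) :
    Measurable (gradient f) :=
  (LinearIsometryEquiv.continuous _).measurable.comp (measurable_fderiv ℝ f)

theorem gradient_eq_zero_of_notMem_tsupport (hx : x ∉ tsupport f) : gradient f x = 0 := by
  rw [(notMem_tsupport_iff_eventuallyEq.1 hx).gradient_eq]
  exact gradient_fun_const x 0

theorem gradient_const_add (c : ℝ) (f : E → ℝ) (x : E) :
    gradient (fun y => c + f y) x = gradient f x := by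
  rw [gradient, gradient, fderiv_const_add]

theorem gradient_sub (hf : DifferentiableAt ℝ f x) (hg : DifferentiableAt ℝ g x) :
    gradient (f - g) x = gradient f x - gradient g x := by
  rw [gradient, fderiv_sub hf hg, map_sub, gradient, gradient]

theorem gradient_eq_of_eventually_le (hg : DifferentiableAt ℝ g x) (hf : DifferentiableAt ℝ f x)
    (hle : ∀ᶠ y in 𝓝 x, f y ≤ g y) (heq : f x = g x) : gradient f x = gradient g x := by
  have hmin : IsLocalMin (fun y => g y - f y) x := hle.mono fun y hy => by
    simpa only [heq, sub_self, sub_nonneg] using hy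
  have hzero := hmin.fderiv_eq_zero
  rw [fderiv_fun_sub hg hf, sub_eq_zero] at hzero
  rw [gradient, gradient, hzero]

theorem continuousAt_gradient (hf : ContDiffAt ℝ 1 f x) :
    ContinuousAt (gradient f) x :=
  (LinearIsometryEquiv.continuous _).continuousAt.comp (hf.continuousAt_fderiv one_ne_zero)

theorem norm_gradient_comp_smul_sub (f : E → ℝ) (c : ℝ) (z x : E) :
    ‖gradient (fun y => f (c • (y - z))) x‖ = |c| * ‖gradient f (c • (x - z))‖ := by
  rw [norm_gradient, norm_gradient, fderiv_comp_sub (𝕜 := ℝ) (f := fun y => f (c • y)) z,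
    fderiv_comp_smul (f := f) c, norm_smul, Real.norm_eq_abs]

end Gradient

section CompactSupport

theorem norm_le_indicator_const {X : Type*} {K : Set X} {M : ℝ} {F : X → ℝ}
    (hb : ∀ x ∈ K, ‖F x‖ ≤ M) (hz : ∀ x ∉ K, F x = 0) (x : X) :
    ‖F x‖ ≤ K.indicator (fun _ => M) x := by
  by_cases hx : x ∈ K
  · simpa only [indicator_of_mem hx] using hb x hx
  · rw [indicator_of_notMem hx, hz x hx, norm_zero]

section Measure

variable {X : Type*} [TopologicalSpace X] [MeasurableSpace X] [OpensMeasurableSpace X]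
  {μ : Measure X} [IsFiniteMeasureOnCompacts μ]

theorem integrable_rpow_of_hasCompactSupport {f : X → ℝ} {p : ℝ} (hp : 0 < p) (hf : Continuous f)
    (hc : HasCompactSupport f) : Integrable (fun x => f x ^ p) μ :=
  (hf.rpow_const fun _ => Or.inr hp.le).integrable_of_hasCompactSupport
    (hc.comp_left (g := (· ^ p)) (Real.zero_rpow hp.ne'))

theorem integral_rpow_mul_le_of_le_on_tsupport {f g φ : X → ℝ} {q : ℝ} (hq : 0 < q)
    (hf : Continuous f) (hf0 : ∀ x, 0 ≤ f x) (hg : Continuous g) (hφ : Continuous φ)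
    (hφ0 : ∀ x, 0 ≤ φ x) (hc : HasCompactSupport φ) (hfg : ∀ x ∈ tsupport φ, f x ≤ g x) :
    ∫ x, f x ^ q * φ x ∂μ ≤ ∫ x, g x ^ q * φ x ∂μ := by
  have hint : ∀ {h : X → ℝ}, Continuous h → Integrable (fun x => h x ^ q * φ x) μ := fun hh =>
    ((hh.rpow_const fun _ => Or.inr hq.le).mul hφ).integrable_of_hasCompactSupport hc.mul_left
  refine integral_mono (hint hf) (hint hg) fun x => ?_
  by_cases hx : x ∈ tsupport φ
  · exact mul_le_mul_of_nonneg_right (Real.rpow_le_rpow (hf0 x) (hfg x hx) hq.le) (hφ0 x)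
  · simp only [image_eq_zero_of_notMem_tsupport hx, mul_zero, le_refl]

variable [T2Space X] {K : Set X} {M : ℝ}

theorem integrable_indicator_const_of_isCompact (hK : IsCompact K) (M : ℝ) :
    Integrable (K.indicator fun _ => M) μ :=
  (integrable_indicator_iff hK.measurableSet).2 (integrableOn_const hK.measure_lt_top.ne)

theorem integrable_of_bounded_on_isCompact (hK : IsCompact K) {F : X → ℝ}
    (hm : AEStronglyMeasurable F μ) (hb : ∀ x ∈ K, ‖F x‖ ≤ M) (hz : ∀ x ∉ K, F x = 0) :
    Integrable F μ :=
  (integrable_indicator_const_of_isCompact hK M).mono' hm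
    (Eventually.of_forall (norm_le_indicator_const hb hz))

theorem tendsto_integral_of_bounded_on_isCompact (hK : IsCompact K) {ι : Type*} {l : Filter ι}
    [l.IsCountablyGenerated] {F : ι → X → ℝ} {f : X → ℝ}
    (hm : ∀ᶠ i in l, AEStronglyMeasurable (F i) μ) (hb : ∀ᶠ i in l, ∀ x ∈ K, ‖F i x‖ ≤ M)
    (hz : ∀ᶠ i in l, ∀ x ∉ K, F i x = 0) (hlim : ∀ᵐ x ∂μ, Tendsto (F · x) l (𝓝 (f x))) :
    Tendsto (fun i => ∫ x, F i x ∂μ) l (𝓝 (∫ x, f x ∂μ)) :=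
  tendsto_integral_filter_of_dominated_convergence _ hm
    (by filter_upwards [hb, hz] with i hbi hzi using
      Eventually.of_forall (norm_le_indicator_const hbi hzi))
    (integrable_indicator_const_of_isCompact hK M) hlim

end Measure

variable {E : Type*} [NormedAddCommGroup E] [InnerProductSpace ℝ E] [FiniteDimensional ℝ E]
  [MeasurableSpace E] [BorelSpace E] {p : ℝ} {C : ℝ≥0} {f φ : E → ℝ} {G : E → E}

theorem integrable_norm_gradient_rpow (hp : 0 < p) (hf : LipschitzWith C f)
    (hc : HasCompactSupport f) : Integrable fun x => ‖gradient f x‖ ^ p := by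
  refine integrable_of_bounded_on_isCompact (M := C ^ p) hc
    ((measurable_gradient f).norm.pow_const p).aestronglyMeasurable (fun x _ => ?_) fun x hx => ?_
  · rw [Real.norm_of_nonneg (by positivity)]
    exact Real.rpow_le_rpow (norm_nonneg _) (norm_gradient_le_of_lipschitz hf x) hp.le
  · rw [gradient_eq_zero_of_notMem_tsupport hx, norm_zero, Real.zero_rpow hp.ne']

theorem measurable_inner_pFlux (hp : 1 < p) {H : E → E} (hG : Measurable G) (hH : Measurable H) :
    Measurable fun x => ⟪pFlux p (G x), H x⟫ :=
  ((continuous_pFlux hp).measurable.comp hG).inner hH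

theorem integral_inner_gradient_congr {H : E → E} (hGH : ∀ x ∈ tsupport φ, G x = H x) :
    ∫ x, ⟪G x, gradient φ x⟫ = ∫ x, ⟪H x, gradient φ x⟫ :=
  integral_congr_ae <| .of_forall fun x => by
    by_cases hx : x ∈ tsupport φ
    · simp only [hGH x hx]
    · simp only [gradient_eq_zero_of_notMem_tsupport hx, inner_zero_right]

theorem integrable_inner_pFlux_gradient (hp : 1 < p) (hG : Measurable G) {M : ℝ}
    (hM : ∀ x ∈ tsupport φ, ‖G x‖ ≤ M) (hφ : LipschitzWith C φ) (hc : HasCompactSupport φ) :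
    Integrable fun x => ⟪pFlux p (G x), gradient φ x⟫ := by
  refine integrable_of_bounded_on_isCompact hc
    (measurable_inner_pFlux hp hG (measurable_gradient φ)).aestronglyMeasurable
    (fun x hx => norm_inner_pFlux_le hp (hM x hx) (norm_gradient_le_of_lipschitz hφ x))
    fun x hx => ?_
  rw [gradient_eq_zero_of_notMem_tsupport hx, inner_zero_right]

end CompactSupport

section Mollification

open scoped Convolution

theorem lipschitzWith_mul_comp_sub_right {E : Type*} [SeminormedAddCommGroup E] {C : ℝ≥0}
    {ψ : E → ℝ} (hψ : LipschitzWith C ψ) (a : ℝ) (t : E) :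
    LipschitzWith (Real.nnabs (a * C)) fun x => a * ψ (x - t) := by
  refine LipschitzWith.of_dist_le_mul fun y z => ?_
  have h := hψ.dist_le_mul (y - t) (z - t)
  rw [dist_sub_right, Real.dist_eq] at h
  rw [Real.dist_eq, ← mul_sub, abs_mul, Real.coe_nnabs, abs_mul, mul_assoc, NNReal.abs_eq]
  gcongr

variable {E : Type*} [NormedAddCommGroup E] [InnerProductSpace ℝ E] [FiniteDimensional ℝ E]
  [MeasurableSpace E] [BorelSpace E] {F : Type*} [NormedAddCommGroup F] [NormedSpace ℝ F]
  {C : ℝ≥0} {ψ : E → ℝ}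

/-- The mollification of `ψ` by the normalised bump function `φ`. -/
noncomputable def mollify (φ : ContDiffBump (0 : E)) (ψ : E → F) : E → F :=
  φ.normed volume ⋆[ContinuousLinearMap.lsmul ℝ ℝ, volume] ψ

theorem mollify_apply (φ : ContDiffBump (0 : E)) (ψ : E → F) (x : E) :
    mollify φ ψ x = ∫ t, φ.normed volume t • ψ (x - t) := rfl

theorem hasFDerivAt_mollify (hψ : LipschitzWith C ψ) (φ : ContDiffBump (0 : E)) (x : E) :
    HasFDerivAt (mollify φ ψ) (mollify φ (fderiv ℝ ψ) x) x := by
  have hshift : ∀ y : E, Continuous fun t => φ.normed volume t * ψ (y - t) := fun y =>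
    φ.continuous_normed.mul (hψ.continuous.comp (by fun_prop))
  have hdiff : ∀ᵐ t : E, DifferentiableAt ℝ ψ (x - t) :=
    (quasiMeasurePreserving_sub_left_of_right_invariant volume x).ae hψ.ae_differentiableAt
  refine (hasFDerivAt_integral_of_dominated_loc_of_lip (𝕜 := ℝ) (μ := (volume : Measure E))
    (F := fun y t => φ.normed volume t * ψ (y - t))
    (F' := fun t => φ.normed volume t • fderiv ℝ ψ (x - t))
    (bound := fun t => φ.normed volume t * C) univ_mem
    (Eventually.of_forall fun y => (hshift y).aestronglyMeasurable)
    ((hshift x).integrable_of_hasCompactSupport φ.hasCompactSupport_normed.mul_right)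
    (φ.continuous_normed.measurable.smul
      ((measurable_fderiv ℝ ψ).comp (by fun_prop))).aestronglyMeasurable
    (Eventually.of_forall fun t =>
      (lipschitzWith_mul_comp_sub_right hψ _ t).lipschitzOnWith)
    (φ.integrable_normed.mul_const _) ?_).2
  filter_upwards [hdiff] with t ht
  simpa using ((hasFDerivAt_comp_sub t).2 ht.hasFDerivAt).const_mul (φ.normed volume t)

theorem contDiff_mollify (hψ : Continuous ψ) (φ : ContDiffBump (0 : E)) :
    ContDiff ℝ (⊤ : ℕ∞) (mollify φ ψ) :=
  φ.hasCompactSupport_normed.contDiff_convolution_left _ φ.contDiff_normed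
    hψ.locallyIntegrable

theorem tsupport_mollify_subset (ψ : E → F) (φ : ContDiffBump (0 : E)) :
    tsupport (mollify φ ψ) ⊆ cthickening φ.rOut (tsupport ψ) := by
  refine closure_minimal ((support_convolution_subset _).trans ?_) isClosed_cthickening
  rintro _ ⟨a, ha, b, hb, rfl⟩
  rw [φ.support_normed_eq, mem_ball_zero_iff] at ha
  refine mem_cthickening_of_dist_le _ b _ _ (subset_tsupport _ hb) ?_
  simpa only [dist_eq_norm, add_sub_cancel_right] using ha.le

theorem norm_gradient_mollify_le (hψ : LipschitzWith C ψ) (φ : ContDiffBump (0 : E)) (x : E) :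
    ‖gradient (mollify φ ψ) x‖ ≤ C := by
  rw [norm_gradient, (hasFDerivAt_mollify hψ φ x).fderiv, mollify_apply]
  calc ‖∫ t, φ.normed volume t • fderiv ℝ ψ (x - t)‖
      ≤ ∫ t, φ.normed volume t * (C : ℝ) := by
        refine norm_integral_le_of_norm_le (φ.integrable_normed.mul_const (C : ℝ))
          (Eventually.of_forall fun t => ?_)
        rw [norm_smul, Real.norm_of_nonneg (φ.nonneg_normed t)]
        exact mul_le_mul_of_nonneg_left (norm_fderiv_le_of_lipschitz ℝ hψ) (φ.nonneg_normed t)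
    _ = C := by rw [integral_mul_const, φ.integral_normed, one_mul]

theorem dist_mollify_le (hψ : LipschitzWith C ψ) (φ : ContDiffBump (0 : E)) (x : E) :
    dist (mollify φ ψ x) (ψ x) ≤ C * φ.rOut :=
  φ.dist_normed_convolution_le hψ.continuous.aestronglyMeasurable fun y hy =>
    (hψ.dist_le_mul y x).trans (mul_le_mul_of_nonneg_left (mem_ball.1 hy).le C.coe_nonneg)

theorem ae_tendsto_gradient_mollify (hψ : LipschitzWith C ψ) {φ : ℕ → ContDiffBump (0 : E)}
    (hφ : Tendsto (fun n => (φ n).rOut) atTop (𝓝 0))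
    (hr : ∀ n, (φ n).rOut ≤ 2 * (φ n).rIn) :
    ∀ᵐ x, Tendsto (fun n => gradient (mollify (φ n) ψ) x) atTop (𝓝 (gradient ψ x)) := by
  have hint : LocallyIntegrable (fderiv ℝ ψ) (volume : Measure E) := by
    refine (locallyIntegrable_const (C : ℝ)).mono
      (measurable_fderiv ℝ ψ).aestronglyMeasurable (Eventually.of_forall fun x => ?_)
    rw [Real.norm_of_nonneg C.coe_nonneg]
    exact norm_fderiv_le_of_lipschitz ℝ hψ
  filter_upwards [ContDiffBump.ae_convolution_tendsto_right_of_locallyIntegrable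
    (K := 2) hφ (Eventually.of_forall hr) hint] with x hx
  simp only [gradient, (hasFDerivAt_mollify hψ _ x).fderiv]
  exact ((LinearIsometryEquiv.continuous _).tendsto _).comp hx

/-- Smooth functions `f n` supported in `K`, bounded together with their gradients by `M`, which
converge to `ψ` everywhere and whose gradients converge to that of `ψ` almost everywhere: enough
for dominated convergence in every energy and weak formulation below. -/
structure IsSmoothApprox (K : Set E) (M : ℝ) (f : ℕ → E → ℝ) (ψ : E → ℝ) : Prop where
  contDiff : ∀ n, ContDiff ℝ (⊤ : ℕ∞) (f n)
  tsupport_subset : ∀ n, tsupport (f n) ⊆ K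
  norm_gradient_le : ∀ n x, ‖gradient (f n) x‖ ≤ M
  norm_le : ∀ n x, ‖f n x‖ ≤ M
  tendsto : ∀ x, Tendsto (fun n => f n x) atTop (𝓝 (ψ x))
  ae_tendsto_gradient : ∀ᵐ x, Tendsto (fun n => gradient (f n) x) atTop (𝓝 (gradient ψ x))

theorem exists_isSmoothApprox (hψ : LipschitzWith C ψ) (hc : HasCompactSupport ψ) {V : Set E}
    (hV : IsOpen V) (hs : tsupport ψ ⊆ V) :
    ∃ K M f, IsCompact K ∧ K ⊆ V ∧ IsSmoothApprox K M f ψ := by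
  obtain ⟨δ, hδ, hδV⟩ := hc.isCompact.exists_cthickening_subset_open hV hs
  obtain ⟨B, hB⟩ := hc.exists_bound_of_continuous hψ.continuous
  have hpos : ∀ n : ℕ, 0 < δ / (n + 1) := fun n => by positivity
  let φ : ℕ → ContDiffBump (0 : E) := fun n =>
    ⟨δ / (n + 1) / 2, δ / (n + 1), half_pos (hpos n), half_lt_self (hpos n)⟩
  have hφ : Tendsto (fun n => (φ n).rOut) atTop (𝓝 0) := by
    simpa [φ, div_eq_mul_inv] using
      (tendsto_one_div_add_atTop_nhds_zero_nat (𝕜 := ℝ)).const_mul δ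
  have hrδ : ∀ n, (φ n).rOut ≤ δ := fun n =>
    div_le_self hδ.le (le_add_of_nonneg_left n.cast_nonneg)
  refine ⟨cthickening δ (tsupport ψ), max C (B + C * δ), fun n => mollify (φ n) ψ,
    hc.isCompact.cthickening, hδV, fun n => contDiff_mollify hψ.continuous _, fun n =>
    (tsupport_mollify_subset ψ _).trans (cthickening_mono (hrδ n) _), fun n x =>
    (norm_gradient_mollify_le hψ _ x).trans (le_max_left _ _), fun n x => le_max_of_le_right ?_,
    ContDiffBump.convolution_tendsto_right_of_continuous hφ hψ.continuous,
    ae_tendsto_gradient_mollify hψ hφ fun n => (mul_div_cancel₀ _ two_ne_zero).ge⟩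
  calc ‖mollify (φ n) ψ x‖ ≤ ‖ψ x‖ + dist (mollify (φ n) ψ x) (ψ x) := by
        rw [dist_eq_norm]; exact norm_le_norm_add_norm_sub' _ _
    _ ≤ B + C * δ := add_le_add (hB x) ((dist_mollify_le hψ _ x).trans
        (mul_le_mul_of_nonneg_left (hrδ n) C.coe_nonneg))

end Mollification

section SmoothApprox

variable {E : Type*} [NormedAddCommGroup E] [InnerProductSpace ℝ E] [FiniteDimensional ℝ E]
  [MeasurableSpace E] [BorelSpace E] {C : ℝ≥0} {p M : ℝ} {K : Set E} {f : ℕ → E → ℝ} {ψ : E → ℝ}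

namespace IsSmoothApprox

theorem hasCompactSupport (h : IsSmoothApprox K M f ψ) (hK : IsCompact K) (n : ℕ) :
    HasCompactSupport (f n) :=
  hK.of_isClosed_subset (isClosed_tsupport _) (h.tsupport_subset n)

theorem gradient_eq_zero (h : IsSmoothApprox K M f ψ) (n : ℕ) {x : E} (hx : x ∉ K) :
    gradient (f n) x = 0 :=
  gradient_eq_zero_of_notMem_tsupport fun h' => hx (h.tsupport_subset n h')

theorem eq_zero (h : IsSmoothApprox K M f ψ) (n : ℕ) {x : E} (hx : x ∉ K) : f n x = 0 :=
  image_eq_zero_of_notMem_tsupport fun h' => hx (h.tsupport_subset n h')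

theorem tendsto_integral_norm_gradient_rpow (h : IsSmoothApprox K M f ψ) (hK : IsCompact K)
    (hp : 0 < p) :
    Tendsto (fun n => ∫ x, ‖gradient (f n) x‖ ^ p) atTop (𝓝 (∫ x, ‖gradient ψ x‖ ^ p)) := by
  refine tendsto_integral_of_bounded_on_isCompact hK (M := M ^ p)
    (.of_forall fun n => ((measurable_gradient (f n)).norm.pow_const p).aestronglyMeasurable)
    (.of_forall fun n x _ => ?_) (.of_forall fun n x hx => ?_)
    (h.ae_tendsto_gradient.mono fun x hx => hx.norm.rpow_const (Or.inr hp.le))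
  · rw [Real.norm_of_nonneg (by positivity)]
    exact Real.rpow_le_rpow (norm_nonneg _) (h.norm_gradient_le n x) hp.le
  · rw [h.gradient_eq_zero n hx, norm_zero, Real.zero_rpow hp.ne']

theorem tendsto_integral_abs_rpow (h : IsSmoothApprox K M f ψ) (hK : IsCompact K) (hp : 0 < p) :
    Tendsto (fun n => ∫ x, |f n x| ^ p) atTop (𝓝 (∫ x, |ψ x| ^ p)) := by
  refine tendsto_integral_of_bounded_on_isCompact hK (M := M ^ p)
    (.of_forall fun n =>
      ((h.contDiff n).continuous.abs.measurable.pow_const p).aestronglyMeasurable)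
    (.of_forall fun n x _ => ?_) (.of_forall fun n x hx => ?_)
    (Eventually.of_forall fun x => (h.tendsto x).abs.rpow_const (Or.inr hp.le))
  · rw [Real.norm_of_nonneg (by positivity)]
    exact Real.rpow_le_rpow (abs_nonneg _) (h.norm_le n x) hp.le
  · rw [h.eq_zero n hx, abs_zero, Real.zero_rpow hp.ne']

theorem tendsto_integral_inner_gradient (h : IsSmoothApprox K M f ψ) (hK : IsCompact K)
    {G : E → E} (hG : Measurable G) (hGK : ContinuousOn G K) :
    Tendsto (fun n => ∫ x, ⟪G x, gradient (f n) x⟫) atTop (𝓝 (∫ x, ⟪G x, gradient ψ x⟫)) := by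
  obtain ⟨B, hB⟩ := hK.exists_bound_of_continuousOn hGK
  refine tendsto_integral_of_bounded_on_isCompact hK (M := B * M)
    (.of_forall fun n => (hG.inner (measurable_gradient (f n))).aestronglyMeasurable)
    (.of_forall fun n x hx => (norm_inner_le_norm _ _).trans ?_) (.of_forall fun n x hx => ?_)
    (h.ae_tendsto_gradient.mono fun x hx => tendsto_const_nhds.inner hx)
  · have hB0 : 0 ≤ B := (norm_nonneg _).trans (hB x hx)
    exact mul_le_mul (hB x hx) (h.norm_gradient_le n x) (norm_nonneg _) hB0
  · rw [h.gradient_eq_zero n hx, inner_zero_right]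

theorem tendsto_integral_mul (h : IsSmoothApprox K M f ψ) (hK : IsCompact K)
    {w : E → ℝ} (hw : Measurable w) (hwK : ContinuousOn w K) :
    Tendsto (fun n => ∫ x, w x * f n x) atTop (𝓝 (∫ x, w x * ψ x)) := by
  obtain ⟨B, hB⟩ := hK.exists_bound_of_continuousOn hwK
  refine tendsto_integral_of_bounded_on_isCompact hK (M := B * M)
    (.of_forall fun n => (hw.mul (h.contDiff n).continuous.measurable).aestronglyMeasurable)
    (.of_forall fun n x hx => ?_) (.of_forall fun n x hx => ?_)
    (Eventually.of_forall fun x => (h.tendsto x).const_mul _)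
  · have hB0 : 0 ≤ B := (norm_nonneg _).trans (hB x hx)
    rw [norm_mul]
    exact mul_le_mul (hB x hx) (h.norm_le n x) (norm_nonneg _) hB0
  · rw [h.eq_zero n hx, mul_zero]

end IsSmoothApprox

theorem integral_inner_gradient_eq_of_lipschitz {V : Set E} (hV : IsOpen V) {G : E → E}
    {w : E → ℝ} (hG : Measurable G) (hGV : ContinuousOn G V) (hw : Measurable w)
    (hwV : ContinuousOn w V)
    (hsmooth : ∀ φ : E → ℝ, ContDiff ℝ (⊤ : ℕ∞) φ → HasCompactSupport φ → tsupport φ ⊆ V →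
      ∫ x, ⟪G x, gradient φ x⟫ = ∫ x, w x * φ x)
    (hψ : LipschitzWith C ψ) (hc : HasCompactSupport ψ) (hs : tsupport ψ ⊆ V) :
    ∫ x, ⟪G x, gradient ψ x⟫ = ∫ x, w x * ψ x := by
  obtain ⟨K, M, f, hK, hKV, hf⟩ := exists_isSmoothApprox hψ hc hV hs
  refine tendsto_nhds_unique
    (hf.tendsto_integral_inner_gradient hK hG (hGV.mono hKV)) ?_
  simp only [hsmooth _ (hf.contDiff _) (hf.hasCompactSupport hK _)
    ((hf.tsupport_subset _).trans hKV)]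
  exact hf.tendsto_integral_mul hK hw (hwV.mono hKV)

/-- The existence of a Lipschitz competitor, compactly supported in `V`, whose `p`-Rayleigh
quotient is smaller than `α`. -/
def AdmitsRayleighLT (p α : ℝ) (V : Set E) : Prop :=
  ∃ (ψ : E → ℝ) (C : ℝ≥0), LipschitzWith C ψ ∧ HasCompactSupport ψ ∧ tsupport ψ ⊆ V ∧
    ∫ x, ‖gradient ψ x‖ ^ p < α * ∫ x, |ψ x| ^ p

theorem exists_ne_zero_of_integral_lt (hp : 0 < p) {α : ℝ}
    (hψ : ∫ x, ‖gradient ψ x‖ ^ p < α * ∫ x, |ψ x| ^ p) : ∃ x, ψ x ≠ 0 := by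
  by_contra! h
  obtain rfl : ψ = fun _ => 0 := funext h
  simp [gradient_fun_const, Real.zero_rpow hp.ne'] at hψ

namespace AdmitsRayleighLT

variable {α : ℝ} {V : Set E}

theorem nonempty (hp : 0 < p) (h : AdmitsRayleighLT p α V) : V.Nonempty :=
  let ⟨_, _, _, _, hs, hlt⟩ := h
  (exists_ne_zero_of_integral_lt hp hlt).imp fun _ hx => hs (subset_tsupport _ hx)

theorem exists_isCompact (h : AdmitsRayleighLT p α V) :
    ∃ K, IsCompact K ∧ K ⊆ V ∧ ∀ ⦃W⦄, K ⊆ W → AdmitsRayleighLT p α W :=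
  let ⟨ψ, C, hψ, hc, hs, hlt⟩ := h
  ⟨tsupport ψ, hc, hs, fun _ hW => ⟨ψ, C, hψ, hc, hW, hlt⟩⟩

theorem preimage_sub_right (h : AdmitsRayleighLT p α V) (z : E) :
    AdmitsRayleighLT p α ((· - z) ⁻¹' V) := by
  obtain ⟨ψ, C, hψ, hc, hs, hlt⟩ := h
  have hsub : LipschitzWith 1 fun x : E => x - z := (IsometryEquiv.subRight z).isometry.lipschitz
  refine ⟨fun x => ψ (x - z), _, hψ.comp hsub,
    hc.comp_isClosedEmbedding (Homeomorph.subRight z).isClosedEmbedding,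
    (tsupport_comp_subset_preimage ψ hsub.continuous).trans (preimage_mono hs), ?_⟩
  simp only [gradient, fderiv_comp_sub] at hlt ⊢
  rwa [integral_sub_right_eq_self fun x => ‖(InnerProductSpace.toDual ℝ E).symm (fderiv ℝ ψ x)‖ ^ p,
    integral_sub_right_eq_self fun x => |ψ x| ^ p]

theorem exists_contDiff (hp : 0 < p) (hV : IsOpen V) (h : AdmitsRayleighLT p α V) :
    ∃ f : E → ℝ, ContDiff ℝ (⊤ : ℕ∞) f ∧ HasCompactSupport f ∧ tsupport f ⊆ V ∧
      ∫ x, ‖gradient f x‖ ^ p < α * ∫ x, |f x| ^ p := by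
  obtain ⟨ψ, C, hψ, hc, hs, hlt⟩ := h
  obtain ⟨K, M, f, hK, hKV, hf⟩ := exists_isSmoothApprox hψ hc hV hs
  obtain ⟨n, hn⟩ := ((hf.tendsto_integral_norm_gradient_rpow hK hp).eventually_lt
    ((hf.tendsto_integral_abs_rpow hK hp).const_mul α) hlt).exists
  exact ⟨f n, hf.contDiff n, hf.hasCompactSupport hK n, (hf.tsupport_subset n).trans hKV, hn⟩

theorem lam1_lt {N : ℕ} {V : Set (EuclideanSpace ℝ (Fin N))} (hp : 0 < p) (hV : IsOpen V)
    (h : AdmitsRayleighLT p α V) : lam1 p V < α := by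
  obtain ⟨f, hf, hc, hs, hlt⟩ := h.exists_contDiff hp hV
  obtain ⟨x, hx⟩ := exists_ne_zero_of_integral_lt hp hlt
  have hpos : 0 < ∫ x, |f x| ^ p :=
    (hf.continuous.abs.rpow_const fun _ => Or.inr hp.le)
      |>.integral_pos_of_hasCompactSupport_nonneg_nonzero
        (hc.comp_left (g := (|·| ^ p)) (by simp only [abs_zero, Real.zero_rpow hp.ne']))
        (fun x => Real.rpow_nonneg (abs_nonneg _) p) (Real.rpow_pos_of_pos (abs_pos.2 hx) p).ne'
  have hgrad : ∫ x in V, ‖gradient f x‖ ^ p = ∫ x, ‖gradient f x‖ ^ p :=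
    setIntegral_eq_integral_of_forall_compl_eq_zero fun x hx => by
      rw [gradient_eq_zero_of_notMem_tsupport fun h => hx (hs h), norm_zero,
        Real.zero_rpow hp.ne']
  have hmass : ∫ x in V, |f x| ^ p = ∫ x, |f x| ^ p :=
    setIntegral_eq_integral_of_forall_compl_eq_zero fun x hx => by
      rw [image_eq_zero_of_notMem_tsupport fun h => hx (hs h), abs_zero, Real.zero_rpow hp.ne']
  unfold lam1
  refine lt_of_le_of_lt (csInf_le ⟨0, ?_⟩ ⟨f, hf, ?_, hc, hs, rfl⟩) ?_
  · rintro r ⟨g, -, -, -, -, rfl⟩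
    exact div_nonneg (integral_nonneg fun x => by positivity)
      (integral_nonneg fun x => by positivity)
  · exact fun h0 => hx (congrFun h0 x)
  · rwa [hgrad, hmass, div_lt_iff₀ hpos]

end AdmitsRayleighLT

end SmoothApprox

section SoftTrunc

variable {ε t : ℝ}

/-- A `C¹` substitute for `t ↦ max (t - ε) 0`: it vanishes for `t ≤ ε` and has slope one for
`t ≥ 2 * ε`. -/
noncomputable def softTrunc (ε t : ℝ) : ℝ := ∫ s in 0..t, Real.smoothTransition ((s - ε) / ε)

theorem continuous_smoothTransition_sub_div (ε : ℝ) :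
    Continuous fun s : ℝ => Real.smoothTransition ((s - ε) / ε) :=
  Real.smoothTransition.continuous.comp (by fun_prop)

theorem hasDerivAt_softTrunc (ε t : ℝ) :
    HasDerivAt (softTrunc ε) (Real.smoothTransition ((t - ε) / ε)) t :=
  ((continuous_smoothTransition_sub_div ε).integral_hasStrictDerivAt 0 t).hasDerivAt

theorem contDiff_softTrunc (ε : ℝ) : ContDiff ℝ 1 (softTrunc ε) := by
  refine contDiff_one_iff_deriv.2 ⟨fun t => (hasDerivAt_softTrunc ε t).differentiableAt, ?_⟩
  rw [funext fun t => (hasDerivAt_softTrunc ε t).deriv]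
  exact continuous_smoothTransition_sub_div ε

theorem monotone_softTrunc (ε : ℝ) : Monotone (softTrunc ε) :=
  monotone_of_hasDerivAt_nonneg (hasDerivAt_softTrunc ε) fun _ => Real.smoothTransition.nonneg _

theorem softTrunc_of_le (hε : 0 < ε) (ht : t ≤ ε) : softTrunc ε t = 0 := by
  refine intervalIntegral.integral_zero_ae (Eventually.of_forall fun s hs => ?_)
  refine Real.smoothTransition.zero_of_nonpos (div_nonpos_of_nonpos_of_nonneg ?_ hε.le)
  exact sub_nonpos.2 (hs.2.trans (max_le hε.le ht))

theorem softTrunc_nonneg (hε : 0 < ε) (t : ℝ) : 0 ≤ softTrunc ε t := by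
  rcases le_total t ε with h | h
  · rw [softTrunc_of_le hε h]
  · exact softTrunc_of_le hε le_rfl ▸ monotone_softTrunc ε h

theorem softTrunc_le (ε : ℝ) (ht : 0 ≤ t) : softTrunc ε t ≤ t := by
  simpa [softTrunc] using intervalIntegral.integral_mono_on (μ := volume) ht
    ((continuous_smoothTransition_sub_div ε).intervalIntegrable 0 t) intervalIntegrable_const
    fun s _ => Real.smoothTransition.le_one _

theorem softTrunc_of_two_mul_le (hε : 0 < ε) (ht : 2 * ε ≤ t) :
    softTrunc ε t = softTrunc ε (2 * ε) + (t - 2 * ε) := by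
  have hint : ∀ a b : ℝ, IntervalIntegrable
      (fun s : ℝ => Real.smoothTransition ((s - ε) / ε)) volume a b :=
    (continuous_smoothTransition_sub_div ε).intervalIntegrable
  have hone : ∫ s in (2 * ε)..t, Real.smoothTransition ((s - ε) / ε) = t - 2 * ε := by
    rw [← integral_one]
    refine intervalIntegral.integral_congr fun s hs => ?_
    rw [uIcc_of_le ht] at hs
    exact Real.smoothTransition.one_of_one_le ((one_le_div hε).2 (by linarith [hs.1]))
  rw [softTrunc, softTrunc, ← hone, intervalIntegral.integral_add_adjacent_intervals
    (hint _ _) (hint _ _)]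

theorem sub_le_softTrunc (hε : 0 < ε) (t : ℝ) : t - 2 * ε ≤ softTrunc ε t := by
  have h0 := softTrunc_nonneg hε
  rcases le_total t (2 * ε) with h | h
  · linarith [h0 t]
  · linarith [h0 (2 * ε), softTrunc_of_two_mul_le hε h]

theorem tendsto_softTrunc (ht : 0 ≤ t) : Tendsto (softTrunc · t) (𝓝[>] 0) (𝓝 t) := by
  have hlow : Tendsto (fun ε : ℝ => t - 2 * ε) (𝓝[>] 0) (𝓝 t) :=
    (Continuous.tendsto' (by fun_prop) 0 t (by ring)).mono_left nhdsWithin_le_nhds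
  refine tendsto_of_tendsto_of_tendsto_of_le_of_le' hlow tendsto_const_nhds ?_
    (Eventually.of_forall fun ε => softTrunc_le ε ht)
  filter_upwards [self_mem_nhdsWithin] with ε hε using sub_le_softTrunc hε t

end SoftTrunc

section Truncation

variable {X : Type*} [TopologicalSpace X] {ε : ℝ} {v : X → ℝ}

theorem tsupport_softTrunc_comp_subset (hε : 0 < ε) (hv : Continuous v) :
    tsupport (softTrunc ε ∘ v) ⊆ {x | ε ≤ v x} :=
  closure_minimal (fun _ hx => le_of_not_ge fun h => hx (softTrunc_of_le hε h))
    (isClosed_le continuous_const hv)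

theorem softTrunc_comp_eventuallyEq_zero (hε : 0 < ε) (hv : Continuous v) {x : X}
    (hx : v x ≤ 0) : softTrunc ε ∘ v =ᶠ[𝓝 x] fun _ => 0 := by
  filter_upwards [(isOpen_lt hv continuous_const).mem_nhds (hx.trans_lt hε)] with y hy
  exact softTrunc_of_le hε (le_of_lt hy)

theorem hasCompactSupport_softTrunc_comp (hε : 0 < ε) (hc : HasCompactSupport v) :
    HasCompactSupport (softTrunc ε ∘ v) :=
  hc.comp_left (softTrunc_of_le hε hε.le)

theorem softTrunc_comp_eventuallyEq (hε : 0 < ε) (hv : Continuous v) {x : X}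
    (hx : 2 * ε < v x) :
    softTrunc ε ∘ v =ᶠ[𝓝 x] fun y => softTrunc ε (2 * ε) - 2 * ε + v y := by
  filter_upwards [(isOpen_lt continuous_const hv).mem_nhds hx] with y hy
  rw [Function.comp_apply, softTrunc_of_two_mul_le hε (le_of_lt hy)]
  ring

end Truncation

section TruncationGradient

variable {E : Type*} [NormedAddCommGroup E] [InnerProductSpace ℝ E] {ε : ℝ} {v : E → ℝ}

theorem contDiff_softTrunc_comp (hε : 0 < ε) (hv : Continuous v)
    (hv1 : ContDiffOn ℝ 1 v {x | 0 < v x}) : ContDiff ℝ 1 (softTrunc ε ∘ v) := by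
  refine contDiff_iff_contDiffAt.2 fun x => ?_
  rcases lt_or_ge 0 (v x) with hx | hx
  · exact (contDiff_softTrunc ε).contDiffAt.comp x
      (hv1.contDiffAt ((isOpen_lt continuous_const hv).mem_nhds hx))
  · exact contDiffAt_const.congr_of_eventuallyEq (softTrunc_comp_eventuallyEq_zero hε hv hx)

variable [CompleteSpace E]

theorem gradient_softTrunc_comp (hε : 0 < ε) (hv : Continuous v)
    (hv1 : ContDiffOn ℝ 1 v {x | 0 < v x}) (x : E) :
    gradient (softTrunc ε ∘ v) x =
      Real.smoothTransition ((v x - ε) / ε) • gradient v x := by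
  rcases lt_or_ge 0 (v x) with hx | hx
  · have hdiff : DifferentiableAt ℝ v x := (hv1.differentiableOn one_ne_zero).differentiableAt
      ((isOpen_lt continuous_const hv).mem_nhds hx)
    rw [gradient, gradient,
      ((hasDerivAt_softTrunc ε (v x)).comp_hasFDerivAt x hdiff.hasFDerivAt).fderiv, map_smul]
  · rw [(softTrunc_comp_eventuallyEq_zero hε hv hx).gradient_eq, gradient_fun_const,
      Real.smoothTransition.zero_of_nonpos (div_nonpos_of_nonpos_of_nonneg (by linarith) hε.le),
      zero_smul]

theorem gradient_softTrunc_comp_of_lt (hε : 0 < ε) (hv : Continuous v) {x : E}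
    (hx : 2 * ε < v x) : gradient (softTrunc ε ∘ v) x = gradient v x := by
  rw [(softTrunc_comp_eventuallyEq hε hv hx).gradient_eq, gradient_const_add]

end TruncationGradient

section TruncRayleigh

variable {E : Type*} [NormedAddCommGroup E] [InnerProductSpace ℝ E] [FiniteDimensional ℝ E]
  [MeasurableSpace E] [BorelSpace E] {p α δ ε : ℝ} {W φ : E → ℝ} {C : ℝ≥0}

theorem tendsto_integral_softTrunc_comp (hW : Continuous W) (hW0 : ∀ x, 0 ≤ W x)
    (hc : HasCompactSupport W) {F : E → ℝ → ℝ} (hF : Continuous (Function.uncurry F))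
    (hF0 : ∀ x, F x 0 = 0) :
    Tendsto (fun ε => ∫ x, F x (softTrunc ε (W x))) (𝓝[>] 0) (𝓝 (∫ x, F x (W x))) := by
  obtain ⟨M, hM⟩ := hc.exists_bound_of_continuous hW
  obtain ⟨B, hB⟩ := (hc.isCompact.prod (isCompact_Icc (a := 0) (b := M)))
    |>.exists_bound_of_continuousOn hF.continuousOn
  have hpos : ∀ᶠ ε : ℝ in 𝓝[>] 0, 0 < ε := self_mem_nhdsWithin
  refine tendsto_integral_of_bounded_on_isCompact (M := B) hc.isCompact
    (.of_forall fun ε => (hF.comp (continuous_id.prodMk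
      ((contDiff_softTrunc ε).continuous.comp hW))).aestronglyMeasurable) ?_ ?_
    (.of_forall fun x => ((hF.comp (Continuous.prodMk_right x)).tendsto _).comp
      (tendsto_softTrunc (hW0 x)))
  · filter_upwards [hpos] with ε hε x hx
    exact hB (x, softTrunc ε (W x)) ⟨hx, softTrunc_nonneg hε _, (softTrunc_le ε (hW0 x)).trans
      ((le_abs_self _).trans (hM x))⟩
  · filter_upwards [hpos] with ε hε x hx
    rw [image_eq_zero_of_notMem_tsupport hx, softTrunc_of_le hε hε.le, hF0]

/-- A substitute for "`W ∈ W₀^{1,p}` and `∫ |∇W|^p ≤ α ∫ W^p`": the truncations of `W` are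
Lipschitz and satisfy the bound obtained by testing `-Δ_p W = α W^{p-1}` with them. -/
structure TruncRayleighLE (p α : ℝ) (W : E → ℝ) : Prop where
  continuous : Continuous W
  nonneg : ∀ x, 0 ≤ W x
  hasCompactSupport : HasCompactSupport W
  lipschitz : ∀ ε > 0, ∃ C : ℝ≥0, LipschitzWith C (softTrunc ε ∘ W)
  energy_le : ∀ ε > 0, ∫ x, ‖gradient (softTrunc ε ∘ W) x‖ ^ p ≤
    α * ∫ x, W x ^ (p - 1) * softTrunc ε (W x)

theorem integral_norm_gradient_add_smul_rpow_le (hp : 1 < p) {C' : ℝ≥0} {f : E → ℝ}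
    (hf : LipschitzWith C f) (hfc : HasCompactSupport f) (hφ : LipschitzWith C' φ)
    (hφc : HasCompactSupport φ) (t : ℝ) :
    ∫ x, ‖gradient (fun y => f y + t * φ y) x‖ ^ p ≤ (∫ x, ‖gradient f x‖ ^ p) +
      p * t * ∫ x, ⟪pFlux p (gradient f x + t • gradient φ x), gradient φ x⟫ := by
  have hflux : Integrable fun x => ⟪pFlux p (gradient f x + t • gradient φ x), gradient φ x⟫ := by
    refine integrable_inner_pFlux_gradient (M := C + ‖t‖ * C') hp
      ((measurable_gradient f).add ((measurable_gradient φ).const_smul t)) (fun x _ => ?_) hφ hφc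
    refine (norm_add_le _ _).trans (add_le_add (norm_gradient_le_of_lipschitz hf x) ?_)
    rw [norm_smul]
    gcongr
    exact norm_gradient_le_of_lipschitz hφ x
  have hp0 : 0 < p := by linarith
  have henergy := integrable_norm_gradient_rpow hp0 hf hfc
  rw [← integral_const_mul, ← integral_add henergy (hflux.const_mul _)]
  refine integral_mono_ae ?_ (henergy.add (hflux.const_mul _)) ?_
  · exact integrable_norm_gradient_rpow hp0
      (hf.add ((lipschitzWith_smul t).comp hφ)) (hfc.add hφc.mul_left)
  · filter_upwards [hf.ae_differentiableAt, hφ.ae_differentiableAt] with x hfx hφx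
    have hgrad : gradient (fun y => f y + t * φ y) x = gradient f x + t • gradient φ x := by
      rw [gradient, fderiv_fun_add hfx (hφx.const_mul t), fderiv_const_mul hφx]
      simp only [gradient, map_add, map_smul]
    have convexity := norm_rpow_sub_le_inner_pFlux hp (gradient f x)
      (gradient f x + t • gradient φ x)
    rw [add_sub_cancel_left, inner_smul_right] at convexity
    rw [hgrad]
    linarith

theorem le_integral_add_smul_rpow (hp : 1 < p) {f : E → ℝ} (hf : Continuous f)
    (hf0 : ∀ x, 0 ≤ f x) (hfc : HasCompactSupport f) (hφ : Continuous φ) (hφ0 : ∀ x, 0 ≤ φ x)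
    (hφc : HasCompactSupport φ) {t : ℝ} (ht : 0 ≤ t) :
    (∫ x, f x ^ p) + p * t * ∫ x, f x ^ (p - 1) * φ x ≤ ∫ x, |f x + t * φ x| ^ p := by
  have hp0 : 0 < p := by linarith
  have hmass := integrable_rpow_of_hasCompactSupport (μ := volume) hp0 hf hfc
  have hcross : Integrable fun x => f x ^ (p - 1) * φ x :=
    ((hf.rpow_const fun _ => Or.inr (by linarith)).mul hφ).integrable_of_hasCompactSupport
      hφc.mul_left
  rw [← integral_const_mul, ← integral_add hmass (hcross.const_mul _)]
  refine integral_mono (hmass.add (hcross.const_mul _)) ?_ fun x => ?_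
  · have habs : HasCompactSupport fun x => |f x + t * φ x| :=
      (hfc.add (hφc.mul_left (f := fun _ => t))).comp_left (g := (|·|)) abs_zero
    exact integrable_rpow_of_hasCompactSupport hp0 (by fun_prop) habs
  · have hsum : 0 ≤ f x + t * φ x := add_nonneg (hf0 x) (mul_nonneg ht (hφ0 x))
    have tangent := rpow_add_mul_sub_le_rpow hp (hf0 x) hsum
    rw [add_sub_cancel_left] at tangent
    simp only [abs_of_nonneg hsum]
    linarith

theorem tendsto_integral_inner_pFlux_add_smul (hp : 1 < p) {f : E → ℝ} {C' : ℝ≥0}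
    (hf : LipschitzWith C f) (hφ : LipschitzWith C' φ) (hφc : HasCompactSupport φ) :
    Tendsto (fun t : ℝ => ∫ x, ⟪pFlux p (gradient f x + t • gradient φ x), gradient φ x⟫) (𝓝 0)
      (𝓝 (∫ x, ⟪pFlux p (gradient f x), gradient φ x⟫)) := by
  refine tendsto_integral_of_bounded_on_isCompact (M := (C + 1 * C') ^ (p - 1) * C') hφc.isCompact
    (.of_forall fun t => (measurable_inner_pFlux hp ((measurable_gradient f).add
      ((measurable_gradient φ).const_smul t)) (measurable_gradient φ)).aestronglyMeasurable)
    ?_ (.of_forall fun t x hx => ?_) (.of_forall fun x => ?_)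
  · filter_upwards [closedBall_mem_nhds (0 : ℝ) one_pos] with t ht x _
    refine norm_inner_pFlux_le hp ?_ (norm_gradient_le_of_lipschitz hφ x)
    refine (norm_add_le _ _).trans (add_le_add (norm_gradient_le_of_lipschitz hf x) ?_)
    rw [norm_smul]
    exact mul_le_mul (mem_closedBall_zero_iff.1 ht) (norm_gradient_le_of_lipschitz hφ x)
      (norm_nonneg _) zero_le_one
  · rw [gradient_eq_zero_of_notMem_tsupport hx, inner_zero_right]
  · have hcont : Continuous fun t : ℝ =>
        ⟪pFlux p (gradient f x + t • gradient φ x), gradient φ x⟫ :=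
      ((continuous_pFlux hp).comp (by fun_prop)).inner continuous_const
    simpa only [zero_smul, add_zero] using hcont.tendsto 0

theorem integral_inner_pFlux_softTrunc_comp_add_smul_eq (hW : Continuous W) (hε : 0 < ε)
    (hεδ : ε ≤ δ) (hs : tsupport φ ⊆ {x | 2 * δ < W x}) (t : ℝ) :
    ∫ x, ⟪pFlux p (gradient (softTrunc ε ∘ W) x + t • gradient φ x), gradient φ x⟫ =
      ∫ x, ⟪pFlux p (gradient (softTrunc δ ∘ W) x + t • gradient φ x), gradient φ x⟫ :=
  integral_inner_gradient_congr fun x hx => by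
    have hδx : 2 * δ < W x := hs hx
    rw [gradient_softTrunc_comp_of_lt hε hW (by linarith : 2 * ε < W x),
      gradient_softTrunc_comp_of_lt (hε.trans_le hεδ) hW hδx]

theorem integral_comp_smul_sub (f : E → ℝ) (c : ℝ) (z : E) :
    ∫ x, f (c • (x - z)) = |(c ^ Module.finrank ℝ E)⁻¹| * ∫ x, f x := by
  rw [integral_sub_right_eq_self (fun x => f (c • x)), Measure.integral_comp_smul, smul_eq_mul]

namespace TruncRayleighLE

theorem admitsRayleighLT_of_add_smul (hp : 1 < p) (h : TruncRayleighLE p α W) (hα : 0 ≤ α)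
    (hφ : LipschitzWith C φ) (hφ0 : ∀ x, 0 ≤ φ x) (hφc : HasCompactSupport φ) (hε : 0 < ε)
    (hs : tsupport φ ⊆ {x | 0 < W x}) {t : ℝ} (ht : 0 ≤ t)
    (hlt : α * (∫ x, W x ^ (p - 1) * softTrunc ε (W x)) +
        p * t * ∫ x, ⟪pFlux p (gradient (softTrunc ε ∘ W) x + t • gradient φ x), gradient φ x⟫ <
      α * ((∫ x, softTrunc ε (W x) ^ p) +
        p * t * ∫ x, softTrunc ε (W x) ^ (p - 1) * φ x)) :
    AdmitsRayleighLT p α {x | 0 < W x} := by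
  obtain ⟨C', hC'⟩ := h.lipschitz ε hε
  have hc := hasCompactSupport_softTrunc_comp hε h.hasCompactSupport
  refine ⟨fun x => (softTrunc ε ∘ W) x + t * φ x, _, hC'.add ((lipschitzWith_smul t).comp hφ),
    hc.add hφc.mul_left, (tsupport_add _ _).trans (union_subset ?_ ?_), ?_⟩
  · exact (tsupport_softTrunc_comp_subset hε h.continuous).trans fun x hx => hε.trans_le hx
  · exact (tsupport_mul_subset_right).trans hs
  · calc ∫ x, ‖gradient (fun y => (softTrunc ε ∘ W) y + t * φ y) x‖ ^ p
        ≤ _ := integral_norm_gradient_add_smul_rpow_le hp hC' hc hφ hφc t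
      _ ≤ _ := add_le_add_left (h.energy_le ε hε) _
      _ < _ := hlt
      _ ≤ _ := mul_le_mul_of_nonneg_left (le_integral_add_smul_rpow hp hC'.continuous
        (fun x => softTrunc_nonneg hε _) hc hφ.continuous hφ0 hφc ht) hα

theorem tendsto_integral_rpow (hp : 0 < p) (h : TruncRayleighLE p α W) :
    Tendsto (fun ε => ∫ x, softTrunc ε (W x) ^ p) (𝓝[>] 0) (𝓝 (∫ x, W x ^ p)) :=
  tendsto_integral_softTrunc_comp h.continuous h.nonneg h.hasCompactSupport (F := fun _ s => s ^ p)
    (continuous_snd.rpow_const fun _ => Or.inr hp.le) fun _ => Real.zero_rpow hp.ne'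

theorem tendsto_integral_rpow_sub_one_mul (hp : 1 < p) (h : TruncRayleighLE p α W) :
    Tendsto (fun ε => ∫ x, W x ^ (p - 1) * softTrunc ε (W x)) (𝓝[>] 0) (𝓝 (∫ x, W x ^ p)) := by
  simpa only [rpow_sub_one_mul_self hp (h.nonneg _)] using
    tendsto_integral_softTrunc_comp h.continuous h.nonneg h.hasCompactSupport
      (F := fun x s => W x ^ (p - 1) * s)
      (((h.continuous.comp continuous_fst).rpow_const fun _ => Or.inr (by linarith)).mul
        continuous_snd) fun _ => mul_zero _

theorem admitsRayleighLT_of_integral_lt (hp : 1 < p) (h : TruncRayleighLE p α W) (hα : 0 ≤ α)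
    (hφ : LipschitzWith C φ) (hφ0 : ∀ x, 0 ≤ φ x) (hφc : HasCompactSupport φ) (hδ : 0 < δ)
    (hs : tsupport φ ⊆ {x | 2 * δ < W x})
    (hlt : ∫ x, ⟪pFlux p (gradient (softTrunc δ ∘ W) x), gradient φ x⟫ <
      α * ∫ x, W x ^ (p - 1) * φ x) :
    AdmitsRayleighLT p α {x | 0 < W x} := by
  obtain ⟨C', hC'⟩ := h.lipschitz δ hδ
  obtain ⟨t, hDt, ht⟩ :
      ∃ t : ℝ, ∫ x, ⟪pFlux p (gradient (softTrunc δ ∘ W) x + t • gradient φ x), gradient φ x⟫ <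
        α * (∫ x, W x ^ (p - 1) * φ x) ∧ 0 < t :=
    (((tendsto_integral_inner_pFlux_add_smul hp hC' hφ hφc).mono_left
      nhdsWithin_le_nhds |>.eventually_lt_const hlt).and
        (self_mem_nhdsWithin (s := Ioi (0 : ℝ)))).exists
  set D := ∫ x, ⟪pFlux p (gradient (softTrunc δ ∘ W) x + t • gradient φ x), gradient φ x⟫
  have hcross : Tendsto (fun ε => ∫ x, softTrunc ε (W x) ^ (p - 1) * φ x) (𝓝[>] 0)
      (𝓝 (∫ x, W x ^ (p - 1) * φ x)) :=
    tendsto_integral_softTrunc_comp h.continuous h.nonneg h.hasCompactSupport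
      (F := fun x s => s ^ (p - 1) * φ x)
      ((continuous_snd.rpow_const fun _ => Or.inr (by linarith)).mul
        (hφ.continuous.comp continuous_fst)) fun x => by
          rw [Real.zero_rpow (by linarith), zero_mul]
  have hlimit : α * (∫ x, W x ^ p) + p * t * D <
      α * ((∫ x, W x ^ p) + p * t * ∫ x, W x ^ (p - 1) * φ x) := by
    have hpt : 0 < p * t := by positivity
    linarith [mul_lt_mul_of_pos_left hDt hpt]
  obtain ⟨ε, hlt', hε⟩ :=
    ((((h.tendsto_integral_rpow_sub_one_mul hp).const_mul α).add_const (p * t * D)).eventually_lt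
      (((h.tendsto_integral_rpow (by linarith)).add (hcross.const_mul (p * t))).const_mul α) hlimit
      |>.and (Ioc_mem_nhdsGT hδ)).exists
  refine h.admitsRayleighLT_of_add_smul hp hα hφ hφ0 hφc hε.1 (fun x hx => ?_) ht.le ?_
  · exact (mul_pos two_pos hδ).trans (hs hx)
  · rwa [integral_inner_pFlux_softTrunc_comp_add_smul_eq h.continuous hε.1 hε.2 hs]

theorem admitsRayleighLT_comp_smul_sub (hp : 1 < p) (h : TruncRayleighLE p α W) (hα : 0 < α)
    (hmass : 0 < ∫ x, W x ^ p) {c : ℝ} (hc0 : 0 < c) (hc1 : c < 1) (z : E) :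
    AdmitsRayleighLT p α {x | 0 < W (c • (x - z))} := by
  have hlimit : c ^ p * (α * ∫ x, W x ^ p) < α * ∫ x, W x ^ p :=
    mul_lt_of_lt_one_left (mul_pos hα hmass) (Real.rpow_lt_one hc0.le hc1 (by linarith))
  obtain ⟨ε, hlt, hε : 0 < ε⟩ :=
    ((((h.tendsto_integral_rpow_sub_one_mul hp).const_mul α).const_mul (c ^ p)).eventually_lt
      ((h.tendsto_integral_rpow (by linarith)).const_mul α) hlimit
      |>.and self_mem_nhdsWithin).exists
  obtain ⟨C, hC⟩ := h.lipschitz ε hε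
  have hsub : LipschitzWith 1 fun x : E => x - z := (IsometryEquiv.subRight z).isometry.lipschitz
  have hscale : Topology.IsClosedEmbedding fun x : E => c • (x - z) :=
    ((Homeomorph.subRight z).trans (Homeomorph.smulOfNeZero c hc0.ne')).isClosedEmbedding
  have hpos : 0 < |(c ^ Module.finrank ℝ E)⁻¹| := by positivity
  refine ⟨fun x => (softTrunc ε ∘ W) (c • (x - z)), _, hC.comp ((lipschitzWith_smul c).comp hsub),
    (hasCompactSupport_softTrunc_comp hε h.hasCompactSupport).comp_isClosedEmbedding hscale,
    (tsupport_softTrunc_comp_subset hε (h.continuous.comp hscale.continuous)).trans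
      fun x hx => hε.trans_le hx, ?_⟩
  calc ∫ x, ‖gradient (fun y => (softTrunc ε ∘ W) (c • (y - z))) x‖ ^ p
      = ∫ x, c ^ p * ‖gradient (softTrunc ε ∘ W) (c • (x - z))‖ ^ p := by
        simp only [norm_gradient_comp_smul_sub, abs_of_pos hc0,
          Real.mul_rpow hc0.le (norm_nonneg _)]
    _ = |(c ^ Module.finrank ℝ E)⁻¹| * (c ^ p * ∫ x, ‖gradient (softTrunc ε ∘ W) x‖ ^ p) := by
        rw [integral_const_mul, mul_left_comm,
          integral_comp_smul_sub (fun x => ‖gradient (softTrunc ε ∘ W) x‖ ^ p)]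
    _ < |(c ^ Module.finrank ℝ E)⁻¹| * (α * ∫ x, softTrunc ε (W x) ^ p) := by
        refine mul_lt_mul_of_pos_left (lt_of_le_of_lt ?_ hlt) hpos
        exact mul_le_mul_of_nonneg_left (h.energy_le ε hε) (Real.rpow_nonneg hc0.le p)
    _ = α * ∫ x, |(softTrunc ε ∘ W) (c • (x - z))| ^ p := by
        simp only [Function.comp_apply, abs_of_nonneg (softTrunc_nonneg hε _)]
        rw [integral_comp_smul_sub (fun x => softTrunc ε (W x) ^ p), mul_left_comm]

end TruncRayleighLE

end TruncRayleigh

theorem lipschitzWith_ite_le {E F : Type*} [NormedAddCommGroup E] [NormedSpace ℝ E]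
    [PseudoMetricSpace F] {C : ℝ≥0} {f g : E → F} {a b : E → ℝ} (hf : LipschitzWith C f)
    (hg : LipschitzWith C g) (ha : Continuous a) (hb : Continuous b)
    (heq : ∀ x, a x = b x → f x = g x) :
    LipschitzWith C fun x => if a x ≤ b x then f x else g x := by
  have hcross : ∀ x y, a x ≤ b x → b y < a y → dist (f x) (g y) ≤ C * dist x y := by
    intro x y hx hy
    obtain ⟨z, hz, hz0⟩ := (convex_segment x y).isPreconnected.intermediate_value
      (left_mem_segment ℝ x y) (right_mem_segment ℝ x y) (f := fun z => a z - b z)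
      (ha.sub hb).continuousOn ⟨sub_nonpos.2 hx, sub_nonneg.2 hy.le⟩
    calc dist (f x) (g y) ≤ dist (f x) (f z) + dist (g z) (g y) :=
          heq z (sub_eq_zero.1 hz0) ▸ dist_triangle _ _ _
      _ ≤ C * dist x z + C * dist z y := add_le_add (hf.dist_le_mul x z) (hg.dist_le_mul z y)
      _ = C * dist x y := by rw [← mul_add, dist_add_dist_of_mem_segment hz]
  refine LipschitzWith.of_dist_le_mul fun x y => ?_
  split_ifs with hx hy hy
  · exact hf.dist_le_mul x y
  · exact hcross x y hx (not_le.1 hy)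
  · rw [dist_comm, dist_comm x]
    exact hcross y x hy (not_le.1 hx)
  · exact hg.dist_le_mul x y

theorem gradient_eq_or_swap_of_max_min {E : Type*} [NormedAddCommGroup E] [InnerProductSpace ℝ E]
    [CompleteSpace E] {a b M m : E → ℝ} {x : E} (ha : DifferentiableAt ℝ a x)
    (hb : DifferentiableAt ℝ b x) (hM : DifferentiableAt ℝ M x) (hm : DifferentiableAt ℝ m x)
    (hMab : M =ᶠ[𝓝 x] fun y => max (a y) (b y)) (hmab : m =ᶠ[𝓝 x] fun y => min (a y) (b y)) :
    gradient M x = gradient a x ∧ gradient m x = gradient b x ∨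
      gradient M x = gradient b x ∧ gradient m x = gradient a x := by
  rcases le_total (b x) (a x) with h | h
  · refine .inl ⟨(gradient_eq_of_eventually_le hM ha ?_ ?_).symm,
      gradient_eq_of_eventually_le hb hm ?_ ?_⟩
    · exact hMab.mono fun y hy => hy ▸ le_max_left _ _
    · rw [hMab.eq_of_nhds, max_eq_left h]
    · exact hmab.mono fun y hy => hy ▸ min_le_right _ _
    · rw [hmab.eq_of_nhds, min_eq_right h]
  · refine .inr ⟨(gradient_eq_of_eventually_le hM hb ?_ ?_).symm,
      gradient_eq_of_eventually_le ha hm ?_ ?_⟩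
    · exact hMab.mono fun y hy => hy ▸ le_max_right _ _
    · rw [hMab.eq_of_nhds, max_eq_right h]
    · exact hmab.mono fun y hy => hy ▸ min_le_left _ _
    · rw [hmab.eq_of_nhds, min_eq_left h]

section BisectorReflection

variable {E : Type*} [NormedAddCommGroup E] [InnerProductSpace ℝ E]

/-- The reflection of `E` exchanging `0` and `c`, i.e. fixing the hyperplane `‖x‖ = ‖x - c‖`. -/
noncomputable def bisectorReflection (c : E) : E ≃ᵢ E :=
  (ℝ ∙ c)ᗮ.reflection.toIsometryEquiv.trans (IsometryEquiv.addRight c)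

theorem bisectorReflection_apply (c x : E) :
    bisectorReflection c x = (ℝ ∙ c)ᗮ.reflection x + c := rfl

theorem norm_bisectorReflection_sub (c x : E) : ‖bisectorReflection c x - c‖ = ‖x‖ := by
  rw [bisectorReflection_apply, add_sub_cancel_right, LinearIsometryEquiv.norm_map]

theorem bisectorReflection_eq_reflection_sub (c x : E) :
    bisectorReflection c x = (ℝ ∙ c)ᗮ.reflection (x - c) := by
  rw [bisectorReflection_apply, map_sub,
    Submodule.reflection_orthogonalComplement_singleton_eq_neg, sub_neg_eq_add]

theorem norm_bisectorReflection (c x : E) : ‖bisectorReflection c x‖ = ‖x - c‖ := by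
  rw [bisectorReflection_eq_reflection_sub, LinearIsometryEquiv.norm_map]

theorem bisectorReflection_bisectorReflection (c x : E) :
    bisectorReflection c (bisectorReflection c x) = x := by
  rw [bisectorReflection_eq_reflection_sub, bisectorReflection_apply, add_sub_cancel_right,
    Submodule.reflection_reflection]

theorem bisectorReflection_of_norm_eq {c x : E} (hx : ‖x‖ = ‖x - c‖) :
    bisectorReflection c x = x := by
  have h := Submodule.reflection_sub hx
  rw [sub_sub_cancel] at h
  rw [bisectorReflection_apply, h, sub_add_cancel]

theorem norm_gradient_comp_bisectorReflection [CompleteSpace E] (c : E) (f : E → ℝ) (x : E) :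
    ‖gradient (fun x => f (bisectorReflection c x)) x‖ =
      ‖gradient f (bisectorReflection c x)‖ := by
  have h := ContinuousLinearEquiv.comp_right_fderiv
    ((ℝ ∙ c)ᗮ.reflection.toContinuousLinearEquiv) (f := fun y => f (y + c)) (x := x)
  rw [fderiv_comp_add_right] at h
  rw [norm_gradient, norm_gradient]
  exact (congrArg norm h).trans (ContinuousLinearMap.opNorm_comp_linearIsometryEquiv _ _)

variable [FiniteDimensional ℝ E] [MeasurableSpace E] [BorelSpace E]

theorem integral_comp_bisectorReflection (c : E) (f : E → ℝ) :
    ∫ x, f (bisectorReflection c x) = ∫ x, f x := by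
  have h := (ℝ ∙ c)ᗮ.reflection.measurePreserving.integral_comp
    (ℝ ∙ c)ᗮ.reflection.toHomeomorph.measurableEmbedding (fun y => f (y + c))
  rwa [integral_add_right_eq_self f c] at h

theorem integral_eq_of_add_comp_bisectorReflection (c : E) {f g : E → ℝ} (hf : Integrable f)
    (hg : Integrable g) (hfg : ∀ᵐ x, f x + f (bisectorReflection c x) =
      g x + g (bisectorReflection c x)) : ∫ x, f x = ∫ x, g x := by
  have hcomp : ∀ {h : E → ℝ}, Integrable h → Integrable fun x => h (bisectorReflection c x) :=
    fun hh => ((measurePreserving_add_right volume c).comp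
      (ℝ ∙ c)ᗮ.reflection.measurePreserving).integrable_comp_of_integrable hh
  have h := integral_congr_ae hfg
  rw [integral_add hf (hcomp hf), integral_add hg (hcomp hg),
    integral_comp_bisectorReflection c f, integral_comp_bisectorReflection c g] at h
  linarith

theorem ae_norm_ne_norm_sub {c : E} (hc : c ≠ 0) : ∀ᵐ x : E, ‖x‖ ≠ ‖x - c‖ := by
  have hnull : volume (AffineSubspace.perpBisector (0 : E) c : Set E) = 0 :=
    Measure.addHaar_affineSubspace _ _ (by simpa [AffineSubspace.perpBisector_eq_top] using hc.symm)
  refine measure_mono_null (fun x hx => ?_) hnull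
  rw [SetLike.mem_coe, AffineSubspace.mem_perpBisector_iff_dist_eq, dist_zero_right, dist_eq_norm]
  exact not_not.1 hx

end BisectorReflection

section Polarization

variable {E : Type*} [NormedAddCommGroup E] [InnerProductSpace ℝ E] {c : E} {v : E → ℝ}

/-- The two-point rearrangement (polarization) of `v` across the hyperplane bisecting `0` and `c`:
of the values of `v` at two symmetric points, the larger one goes to the side of `0`. -/
noncomputable def polarize (c : E) (v : E → ℝ) (x : E) : ℝ :=
  if ‖x‖ ≤ ‖x - c‖ then max (v x) (v (bisectorReflection c x))
  else min (v x) (v (bisectorReflection c x))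

theorem polarize_of_le {x : E} (hx : ‖x‖ ≤ ‖x - c‖) :
    polarize c v x = max (v x) (v (bisectorReflection c x)) := if_pos hx

theorem polarize_of_lt {x : E} (hx : ‖x - c‖ < ‖x‖) :
    polarize c v x = min (v x) (v (bisectorReflection c x)) := if_neg hx.not_ge

theorem polarize_eq_or_swap (c : E) (v : E → ℝ) (x : E) :
    polarize c v x = v x ∧ polarize c v (bisectorReflection c x) = v (bisectorReflection c x) ∨
      polarize c v x = v (bisectorReflection c x) ∧
        polarize c v (bisectorReflection c x) = v x := by
  simp only [polarize, norm_bisectorReflection, norm_bisectorReflection_sub,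
    bisectorReflection_bisectorReflection]
  rcases lt_trichotomy ‖x‖ ‖x - c‖ with h | h | h
  · rw [if_pos h.le, if_neg h.not_ge]
    grind
  · rw [bisectorReflection_of_norm_eq h]
    simp
  · rw [if_neg h.not_ge, if_pos h.le]
    grind

theorem polarize_eq_or (c : E) (v : E → ℝ) (x : E) :
    polarize c v x = v x ∨ polarize c v x = v (bisectorReflection c x) :=
  (polarize_eq_or_swap c v x).imp And.left And.left

theorem polarize_comp_monotone {f : ℝ → ℝ} (hf : Monotone f) (c : E) (v : E → ℝ) :
    polarize c (f ∘ v) = f ∘ polarize c v := by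
  ext x
  simp only [polarize, Function.comp_apply]
  split_ifs
  · exact hf.map_max.symm
  · exact hf.map_min.symm

theorem continuous_polarize (hv : Continuous v) (c : E) : Continuous (polarize c v) := by
  have hσ := hv.comp (bisectorReflection c).continuous
  refine Continuous.if_le (hv.max hσ) (hv.min hσ) (by fun_prop) (by fun_prop) fun x hx => ?_
  simp only [bisectorReflection_of_norm_eq hx, max_self, min_self]

theorem lipschitzWith_comp_bisectorReflection {C : ℝ≥0} (hv : LipschitzWith C v) (c : E) :
    LipschitzWith C fun x => v (bisectorReflection c x) := by
  have h := hv.comp (bisectorReflection c).isometry.lipschitz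
  rwa [mul_one] at h

theorem lipschitzWith_polarize {C : ℝ≥0} (hv : LipschitzWith C v) (c : E) :
    LipschitzWith C (polarize c v) := by
  have hσ := lipschitzWith_comp_bisectorReflection hv c
  refine lipschitzWith_ite_le (by simpa only [max_self] using hv.max hσ)
    (by simpa only [max_self] using hv.min hσ) (by fun_prop) (by fun_prop) fun x hx => ?_
  simp only [bisectorReflection_of_norm_eq hx, max_self, min_self]

theorem hasCompactSupport_polarize (hv : HasCompactSupport v) (c : E) :
    HasCompactSupport (polarize c v) := by
  have hσ : HasCompactSupport fun x => v (bisectorReflection c x) :=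
    hv.comp_homeomorph (bisectorReflection c).toHomeomorph
  refine HasCompactSupport.of_support_subset_isCompact (hv.isCompact.union hσ.isCompact)
    fun x hx => ?_
  exact (polarize_eq_or c v x).imp (fun h => subset_tsupport _ fun h0 => hx (h.trans h0))
    fun h => subset_tsupport _ fun h0 => hx (h.trans h0)

theorem gradient_polarize_eq_or_swap [CompleteSpace E] {x : E} (hx : ‖x‖ ≠ ‖x - c‖)
    (hv : DifferentiableAt ℝ v x)
    (hvσ : DifferentiableAt ℝ (fun y => v (bisectorReflection c y)) x)
    (hw : DifferentiableAt ℝ (polarize c v) x)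
    (hwσ : DifferentiableAt ℝ (fun y => polarize c v (bisectorReflection c y)) x) :
    gradient (polarize c v) x = gradient v x ∧
        gradient (fun y => polarize c v (bisectorReflection c y)) x =
          gradient (fun y => v (bisectorReflection c y)) x ∨
      gradient (polarize c v) x = gradient (fun y => v (bisectorReflection c y)) x ∧
        gradient (fun y => polarize c v (bisectorReflection c y)) x = gradient v x := by
  rcases hx.lt_or_gt with h | h
  · have hev : ∀ᶠ y in 𝓝 x, ‖y‖ < ‖y - c‖ :=
      ContinuousAt.eventually_lt (by fun_prop) (by fun_prop) h
    refine gradient_eq_or_swap_of_max_min hv hvσ hw hwσ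
      (hev.mono fun y hy => polarize_of_le hy.le) (hev.mono fun y hy => ?_)
    rw [← norm_bisectorReflection, ← norm_bisectorReflection_sub c y] at hy
    simp only [polarize_of_lt hy, bisectorReflection_bisectorReflection, min_comm]
  · have hev : ∀ᶠ y in 𝓝 x, ‖y - c‖ < ‖y‖ :=
      ContinuousAt.eventually_lt (by fun_prop) (by fun_prop) h
    refine (gradient_eq_or_swap_of_max_min hvσ hv hwσ hw
      (hev.mono fun y hy => ?_) (hev.mono fun y hy => ?_)).imp And.symm And.symm
    · rw [← norm_bisectorReflection, ← norm_bisectorReflection_sub c y] at hy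
      simp only [polarize_of_le hy.le, bisectorReflection_bisectorReflection]
    · exact (polarize_of_lt hy).trans (min_comm _ _)

variable [FiniteDimensional ℝ E] [MeasurableSpace E] [BorelSpace E] {p : ℝ}

theorem integral_comp_polarize (hv : Continuous v) (hc : HasCompactSupport v) (c : E)
    {Φ : ℝ → ℝ} (hΦ : Continuous Φ) (hΦ0 : Φ 0 = 0) :
    ∫ x, Φ (polarize c v x) = ∫ x, Φ (v x) := by
  refine integral_eq_of_add_comp_bisectorReflection c
    ((hΦ.comp (continuous_polarize hv c)).integrable_of_hasCompactSupport
      ((hasCompactSupport_polarize hc c).comp_left hΦ0))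
    ((hΦ.comp hv).integrable_of_hasCompactSupport (hc.comp_left hΦ0)) (.of_forall fun x => ?_)
  rcases polarize_eq_or_swap c v x with ⟨h, h'⟩ | ⟨h, h'⟩
  · rw [h, h']
  · rw [h, h', add_comm]

theorem integral_norm_gradient_polarize_rpow (hp : 0 < p) {C : ℝ≥0} (hv : LipschitzWith C v)
    (hcpt : HasCompactSupport v) (hc : c ≠ 0) :
    ∫ x, ‖gradient (polarize c v) x‖ ^ p = ∫ x, ‖gradient v x‖ ^ p := by
  have hw := lipschitzWith_polarize hv c
  refine integral_eq_of_add_comp_bisectorReflection c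
    (integrable_norm_gradient_rpow hp hw (hasCompactSupport_polarize hcpt c))
    (integrable_norm_gradient_rpow hp hv hcpt) ?_
  filter_upwards [ae_norm_ne_norm_sub hc, hv.ae_differentiableAt,
    (lipschitzWith_comp_bisectorReflection hv c).ae_differentiableAt, hw.ae_differentiableAt,
    (lipschitzWith_comp_bisectorReflection hw c).ae_differentiableAt] with x hx h₁ h₂ h₃ h₄
  rw [← norm_gradient_comp_bisectorReflection, ← norm_gradient_comp_bisectorReflection]
  rcases gradient_polarize_eq_or_swap hx h₁ h₂ h₃ h₄ with ⟨h, h'⟩ | ⟨h, h'⟩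
  · exact h ▸ h' ▸ rfl
  · exact h ▸ h' ▸ add_comm _ _

theorem TruncRayleighLE.polarize {α : ℝ} (hp : 1 < p) (h : TruncRayleighLE p α v) (hc : c ≠ 0) :
    TruncRayleighLE p α (polarize c v) where
  continuous := continuous_polarize h.continuous c
  nonneg x := (polarize_eq_or c v x).elim (fun hx => hx ▸ h.nonneg _) fun hx => hx ▸ h.nonneg _
  hasCompactSupport := hasCompactSupport_polarize h.hasCompactSupport c
  lipschitz ε hε := by
    obtain ⟨C, hC⟩ := h.lipschitz ε hε
    exact ⟨C, polarize_comp_monotone (monotone_softTrunc ε) c v ▸ lipschitzWith_polarize hC c⟩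
  energy_le ε hε := by
    obtain ⟨C, hC⟩ := h.lipschitz ε hε
    have hΦ : Continuous fun t : ℝ => t ^ (p - 1) * softTrunc ε t :=
      (continuous_id.rpow_const fun _ => Or.inr (by linarith)).mul (contDiff_softTrunc ε).continuous
    rw [← polarize_comp_monotone (monotone_softTrunc ε),
      integral_norm_gradient_polarize_rpow (by linarith) hC
        (hasCompactSupport_softTrunc_comp hε h.hasCompactSupport) hc,
      integral_comp_polarize h.continuous h.hasCompactSupport c hΦ
        (by rw [softTrunc_of_le hε hε.le, mul_zero])]
    exact h.energy_le ε hε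

end Polarization

section Eigenfunction

variable {E : Type*} [NormedAddCommGroup E] [InnerProductSpace ℝ E] [FiniteDimensional ℝ E]
  [MeasurableSpace E] [BorelSpace E] {p α ε : ℝ} {v : E → ℝ}

theorem eq_zero_of_integral_norm_gradient_rpow_nonpos [Nontrivial E] (hp : 0 < p) {f : E → ℝ}
    (hf : ContDiff ℝ 1 f) (hc : HasCompactSupport f) (h : ∫ x, ‖gradient f x‖ ^ p ≤ 0) (x : E) :
    f x = 0 := by
  have hgrad : ∀ y, gradient f y = 0 := by
    by_contra! hne
    obtain ⟨y, hy⟩ := hne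
    have hcont : Continuous fun z => ‖gradient f z‖ ^ p :=
      (continuous_iff_continuousAt.2 fun z => continuousAt_gradient hf.contDiffAt).norm.rpow_const
        fun _ => Or.inr hp.le
    refine h.not_gt (hcont.integral_pos_of_hasCompactSupport_nonneg_nonzero
      (.intro hc fun z hz => ?_) (fun z => by positivity) (x := y)
      (Real.rpow_pos_of_pos (norm_pos_iff.2 hy) p).ne')
    simp only [gradient_eq_zero_of_notMem_tsupport hz, norm_zero, Real.zero_rpow hp.ne']
  have hfderiv : ∀ y, fderiv ℝ f y = 0 := fun y => by
    rw [← norm_eq_zero, ← norm_gradient, hgrad, norm_zero]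
  have : NoncompactSpace E := NormedSpace.noncompactSpace ℝ E
  obtain ⟨y, hy⟩ := (ne_univ_iff_exists_notMem _).1 hc.ne_univ
  rw [is_const_of_fderiv_eq_zero (hf.differentiable one_ne_zero) hfderiv x y,
    image_eq_zero_of_notMem_tsupport hy]

/-- `v` is a nonnegative, nonzero, compactly supported solution of `-Δ_p v = α v^{p-1}` on the open
set where it is positive, extended by `0`. -/
structure IsPEigenfunction (p α : ℝ) (v : E → ℝ) : Prop where
  continuous : Continuous v
  nonneg : ∀ x, 0 ≤ v x
  hasCompactSupport : HasCompactSupport v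
  contDiffOn : ContDiffOn ℝ 1 v {x | 0 < v x}
  exists_pos : ∃ x, 0 < v x
  weak : ∀ φ : E → ℝ, ContDiff ℝ (⊤ : ℕ∞) φ → HasCompactSupport φ → tsupport φ ⊆ {x | 0 < v x} →
    ∫ x, ⟪pFlux p (gradient v x), gradient φ x⟫ = α * ∫ x, v x ^ (p - 1) * φ x

namespace IsPEigenfunction

theorem isOpen_pos (h : IsPEigenfunction p α v) : IsOpen {x | 0 < v x} :=
  isOpen_lt continuous_const h.continuous

theorem contDiffAt (h : IsPEigenfunction p α v) {x : E} (hx : 0 < v x) : ContDiffAt ℝ 1 v x :=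
  h.contDiffOn.contDiffAt (h.isOpen_pos.mem_nhds hx)

theorem differentiableAt (h : IsPEigenfunction p α v) {x : E} (hx : 0 < v x) :
    DifferentiableAt ℝ v x :=
  (h.contDiffAt hx).differentiableAt one_ne_zero

theorem continuousOn_gradient (h : IsPEigenfunction p α v) :
    ContinuousOn (gradient v) {x | 0 < v x} :=
  fun _ hx => (continuousAt_gradient (h.contDiffAt hx)).continuousWithinAt

theorem continuous_rpow_sub_one (hp : 1 < p) (h : IsPEigenfunction p α v) :
    Continuous fun x => v x ^ (p - 1) :=
  h.continuous.rpow_const fun _ => Or.inr (by linarith)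

theorem weak_of_lipschitz (hp : 1 < p) (h : IsPEigenfunction p α v) {C : ℝ≥0} {φ : E → ℝ}
    (hφ : LipschitzWith C φ) (hc : HasCompactSupport φ) (hs : tsupport φ ⊆ {x | 0 < v x}) :
    ∫ x, ⟪pFlux p (gradient v x), gradient φ x⟫ = α * ∫ x, v x ^ (p - 1) * φ x := by
  have hw : Continuous fun x => α * v x ^ (p - 1) :=
    continuous_const.mul (h.continuous_rpow_sub_one hp)
  rw [integral_inner_gradient_eq_of_lipschitz (G := fun x => pFlux p (gradient v x)) h.isOpen_pos
    ((continuous_pFlux hp).measurable.comp (measurable_gradient v))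
    ((continuous_pFlux hp).comp_continuousOn h.continuousOn_gradient) hw.measurable hw.continuousOn
    (fun ψ hψ hψc hψs => ?_) hφ hc hs]
  · simp only [mul_assoc, integral_const_mul]
  · simpa only [mul_assoc, integral_const_mul] using h.weak ψ hψ hψc hψs

theorem tsupport_softTrunc_comp_subset_pos (h : IsPEigenfunction p α v) (hε : 0 < ε) :
    tsupport (softTrunc ε ∘ v) ⊆ {x | 0 < v x} :=
  (tsupport_softTrunc_comp_subset hε h.continuous).trans fun _ hx => hε.trans_le hx

theorem exists_lipschitzWith_softTrunc_comp (h : IsPEigenfunction p α v) (hε : 0 < ε) :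
    ∃ C : ℝ≥0, LipschitzWith C (softTrunc ε ∘ v) :=
  (contDiff_softTrunc_comp hε h.continuous h.contDiffOn).lipschitzWith_of_hasCompactSupport
    (hasCompactSupport_softTrunc_comp hε h.hasCompactSupport) one_ne_zero

theorem norm_gradient_softTrunc_comp_rpow_le (hp : 1 < p) (h : IsPEigenfunction p α v)
    (hε : 0 < ε) (x : E) : ‖gradient (softTrunc ε ∘ v) x‖ ^ p ≤
      ⟪pFlux p (gradient v x), gradient (softTrunc ε ∘ v) x⟫ := by
  have hθ0 := Real.smoothTransition.nonneg ((v x - ε) / ε)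
  rw [gradient_softTrunc_comp hε h.continuous h.contDiffOn, real_inner_smul_right,
    inner_pFlux_self hp, norm_smul, Real.norm_of_nonneg hθ0, Real.mul_rpow hθ0 (norm_nonneg _)]
  refine mul_le_mul_of_nonneg_right ?_ (Real.rpow_nonneg (norm_nonneg _) p)
  exact Real.rpow_le_self_of_le_one hθ0 (Real.smoothTransition.le_one _) hp.le

theorem truncRayleighLE (hp : 1 < p) (h : IsPEigenfunction p α v) : TruncRayleighLE p α v where
  continuous := h.continuous
  nonneg := h.nonneg
  hasCompactSupport := h.hasCompactSupport
  lipschitz _ hε := h.exists_lipschitzWith_softTrunc_comp hε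
  energy_le ε hε := by
    obtain ⟨C, hC⟩ := h.exists_lipschitzWith_softTrunc_comp hε
    have hcpt := hasCompactSupport_softTrunc_comp hε h.hasCompactSupport
    have hs := h.tsupport_softTrunc_comp_subset_pos hε
    obtain ⟨M, hM⟩ := hcpt.isCompact.exists_bound_of_continuousOn (h.continuousOn_gradient.mono hs)
    exact (integral_mono (integrable_norm_gradient_rpow (by linarith) hC hcpt)
      (integrable_inner_pFlux_gradient hp (measurable_gradient v) hM hC hcpt)
      (h.norm_gradient_softTrunc_comp_rpow_le hp hε)).trans_eq (h.weak_of_lipschitz hp hC hcpt hs)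

theorem integral_rpow_pos (hp : 0 < p) (h : IsPEigenfunction p α v) : 0 < ∫ x, v x ^ p := by
  obtain ⟨x, hx⟩ := h.exists_pos
  exact (h.continuous.rpow_const fun _ => Or.inr hp.le)
    |>.integral_pos_of_hasCompactSupport_nonneg_nonzero
      (h.hasCompactSupport.comp_left (g := (· ^ p)) (Real.zero_rpow hp.ne'))
      (fun y => Real.rpow_nonneg (h.nonneg y) p) (Real.rpow_pos_of_pos hx p).ne'

variable [Nontrivial E]

theorem eigenvalue_pos (hp : 1 < p) (h : IsPEigenfunction p α v) : 0 < α := by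
  obtain ⟨x, hx⟩ := h.exists_pos
  by_contra! hα
  have hε : 0 < v x / 4 := by positivity
  have henergy := ((h.truncRayleighLE hp).energy_le _ hε).trans
    (mul_nonpos_of_nonpos_of_nonneg hα (integral_nonneg fun y =>
      mul_nonneg (Real.rpow_nonneg (h.nonneg y) _) (softTrunc_nonneg hε _)))
  have hzero := eq_zero_of_integral_norm_gradient_rpow_nonpos (by linarith)
    (contDiff_softTrunc_comp hε h.continuous h.contDiffOn)
    (hasCompactSupport_softTrunc_comp hε h.hasCompactSupport) henergy x
  rw [Function.comp_apply] at hzero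
  linarith [sub_le_softTrunc hε (v x)]

theorem exists_ne_of_isOpen (hp : 1 < p) (h : IsPEigenfunction p α v) {U : Set E} (hU : IsOpen U)
    (hne : U.Nonempty) {m : ℝ} (hm : 0 < m) : ∃ x ∈ U, v x ≠ m := by
  by_contra! hUm
  obtain ⟨x, hx⟩ := hne
  obtain ⟨f, hfU, hfc, hf, hf01, hfx⟩ :=
    exists_contDiff_tsupport_subset (n := (⊤ : ℕ∞)) (hU.mem_nhds hx)
  have hflux : ∀ y, ⟪pFlux p (gradient v y), gradient f y⟫ = 0 := fun y => by
    by_cases hy : y ∈ tsupport f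
    · have hev : v =ᶠ[𝓝 y] fun _ => m := mem_of_superset (hU.mem_nhds (hfU hy)) hUm
      rw [hev.gradient_eq, gradient_fun_const, pFlux_zero, inner_zero_left]
    · rw [gradient_eq_zero_of_notMem_tsupport hy, inner_zero_right]
  have hmass : 0 < ∫ y, v y ^ (p - 1) * f y := by
    refine ((h.continuous_rpow_sub_one hp).mul hf.continuous)
      |>.integral_pos_of_hasCompactSupport_nonneg_nonzero hfc.mul_left (x := x)
        (fun y => mul_nonneg (Real.rpow_nonneg (h.nonneg y) _) (hf01 (mem_range_self y)).1) ?_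
    rw [hfx, mul_one, hUm x hx]
    exact (Real.rpow_pos_of_pos hm _).ne'
  have hweak := h.weak f hf hfc (hfU.trans fun y hy => hm.trans_eq (hUm y hy).symm)
  simp only [hflux, integral_zero] at hweak
  exact (mul_pos (h.eigenvalue_pos hp) hmass).ne hweak

end IsPEigenfunction

end Eigenfunction

theorem integral_lt_integral_of_ae_le_of_measure_ne_zero {X : Type*} [MeasurableSpace X]
    {μ : Measure X} {f g : X → ℝ} (hf : Integrable f μ) (hg : Integrable g μ) (hle : f ≤ᵐ[μ] g)
    {S : Set X} (hS : μ S ≠ 0) (hlt : ∀ᵐ x ∂μ, x ∈ S → f x < g x) :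
    ∫ x, f x ∂μ < ∫ x, g x ∂μ := by
  refine (integral_mono_ae hf hg hle).lt_of_ne fun h => hS (measure_eq_zero_iff_ae_notMem.2 ?_)
  filter_upwards [(integral_eq_iff_of_ae_le hf hg hle).1 h, hlt] with x hx hltx hxS
  exact (hltx hxS).ne hx

section KinkBump

variable {X : Type*} [PseudoMetricSpace X] {L ρ : ℝ} {d : X → ℝ} {x₀ : X}

/-- A bump of height `ρ` at `x₀` which decreases steeply, with slope `L`, in the set `0 < d`. -/
noncomputable def kinkBump (L ρ : ℝ) (d : X → ℝ) (x₀ x : X) : ℝ :=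
  max 0 (ρ - L * max (d x) 0 - dist x x₀)

theorem kinkBump_nonneg (L ρ : ℝ) (d : X → ℝ) (x₀ x : X) : 0 ≤ kinkBump L ρ d x₀ x :=
  le_max_left _ _

theorem exists_lipschitzWith_kinkBump {C : ℝ≥0} (hd : LipschitzWith C d) (L ρ : ℝ) (x₀ : X) :
    ∃ C' : ℝ≥0, LipschitzWith C' (kinkBump L ρ d x₀) :=
  ⟨_, (((LipschitzWith.const ρ).sub ((lipschitzWith_smul L).comp (hd.max_const 0))).sub
    (LipschitzWith.dist_left x₀)).const_max 0⟩

theorem tsupport_kinkBump_subset (hL : 0 ≤ L) : tsupport (kinkBump L ρ d x₀) ⊆ closedBall x₀ ρ := by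
  refine closure_minimal (fun x hx => ?_) isClosed_closedBall
  have hpos := (kinkBump_nonneg L ρ d x₀ x).lt_of_ne' hx
  rw [kinkBump, lt_max_iff, or_iff_right (lt_irrefl 0)] at hpos
  rw [mem_closedBall]
  linarith [mul_nonneg hL (le_max_right (d x) 0)]

end KinkBump

section KinkBumpGradient

variable {E : Type*} [NormedAddCommGroup E] [InnerProductSpace ℝ E] [CompleteSpace E] {L ρ : ℝ}
  {d : E → ℝ} {x₀ x : E}

theorem gradient_kinkBump (hd : Continuous d) (hdx : DifferentiableAt ℝ d x)
    (hφx : DifferentiableAt ℝ (kinkBump L ρ d x₀) x) (hpos : 0 < d x)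
    (hφ : 0 < kinkBump L ρ d x₀ x) :
    gradient (kinkBump L ρ d x₀) x = -(L • gradient d x) - gradient (dist · x₀) x := by
  have hev : (dist · x₀) =ᶠ[𝓝 x] fun y => ρ - L * d y - kinkBump L ρ d x₀ y := by
    have hcont : ContinuousAt (fun y => ρ - L * max (d y) 0 - dist y x₀) x := by fun_prop
    rw [kinkBump, lt_max_iff, or_iff_right (lt_irrefl 0)] at hφ
    filter_upwards [hcont.eventually_const_lt hφ, hd.continuousAt.eventually_const_lt hpos]
      with y hy hdy
    rw [kinkBump, max_eq_right hy.le, max_eq_left hdy.le]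
    ring
  have hfderiv : fderiv ℝ (kinkBump L ρ d x₀) x =
      -(L • fderiv ℝ d x) - fderiv ℝ (dist · x₀) x := by
    rw [hev.fderiv_eq, fderiv_fun_sub ((hdx.const_mul L).const_sub ρ) hφx, fderiv_const_sub,
      fderiv_const_mul hdx, sub_sub_cancel]
  rw [gradient, hfderiv, map_sub, map_neg, map_smul, gradient, gradient]

theorem inner_gradient_kinkBump_le (hd : Continuous d) (hdx : DifferentiableAt ℝ d x)
    (hφx : DifferentiableAt ℝ (kinkBump L ρ d x₀) x) (hpos : 0 < d x)
    (hφ : 0 < kinkBump L ρ d x₀ x) (w : E) :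
    ⟪w, gradient (kinkBump L ρ d x₀) x⟫ ≤ ‖w‖ - L * ⟪w, gradient d x⟫ := by
  have hdist : ‖gradient (dist · x₀) x‖ ≤ 1 :=
    norm_gradient_le_of_lipschitz (LipschitzWith.dist_left x₀) x
  rw [gradient_kinkBump hd hdx hφx hpos hφ, inner_sub_right, inner_neg_right,
    real_inner_smul_right]
  linarith [neg_le_of_abs_le ((abs_real_inner_le_norm w (gradient (dist · x₀) x)).trans
    (mul_le_of_le_one_right (norm_nonneg w) hdist))]

theorem gradient_kinkBump_of_eq_zero (hφ : kinkBump L ρ d x₀ x = 0) :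
    gradient (kinkBump L ρ d x₀) x = 0 := by
  have hmin : IsLocalMin (kinkBump L ρ d x₀) x :=
    .of_forall fun y => hφ ▸ kinkBump_nonneg L ρ d x₀ y
  rw [gradient, hmin.fderiv_eq_zero, map_zero]

theorem exists_pos_kinkBump_pos (hρ : 0 < ρ) (hd : Continuous d) (h₀ : d x₀ = 0)
    (hgrad : gradient d x₀ ≠ 0) : ∃ x, 0 < d x ∧ 0 < kinkBump L ρ d x₀ x := by
  by_contra! hcon
  have hcont : Continuous (kinkBump L ρ d x₀) := by unfold kinkBump; fun_prop
  have hpos : 0 < kinkBump L ρ d x₀ x₀ := by simp [kinkBump, h₀, hρ]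
  have hmax : IsLocalMax d x₀ := by
    filter_upwards [hcont.continuousAt.eventually_const_lt hpos] with y hy
    exact h₀ ▸ le_of_not_gt fun h => (hcon y h).not_gt hy
  exact hgrad (by rw [gradient, hmax.fderiv_eq_zero, map_zero])

end KinkBumpGradient

section Kink

variable {E : Type*} [NormedAddCommGroup E] [InnerProductSpace ℝ E] {p L ρ : ℝ} {a b : E → ℝ}
  {x₀ x : E}

theorem gradient_max_of_le [CompleteSpace E] (ha : DifferentiableAt ℝ a x)
    (hmax : DifferentiableAt ℝ (fun y => max (a y) (b y)) x) (hle : b x ≤ a x) :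
    gradient (fun y => max (a y) (b y)) x = gradient a x :=
  (gradient_eq_of_eventually_le hmax ha (.of_forall fun _ => le_max_left _ _)
    (max_eq_left hle).symm).symm

variable [CompleteSpace E]

theorem inner_pFlux_gradient_max_kinkBump_lt (ha : Differentiable ℝ a) (hb : Differentiable ℝ b)
    (hmax : DifferentiableAt ℝ (fun y => max (a y) (b y)) x)
    (hφx : DifferentiableAt ℝ (kinkBump L ρ (b - a) x₀) x)
    (hL : ‖pFlux p (gradient b x) - pFlux p (gradient a x)‖ <
      L * ⟪pFlux p (gradient b x) - pFlux p (gradient a x), gradient b x - gradient a x⟫)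
    (hpos : a x < b x) (hφ : 0 < kinkBump L ρ (b - a) x₀ x) :
    ⟪pFlux p (gradient (fun y => max (a y) (b y)) x), gradient (kinkBump L ρ (b - a) x₀) x⟫ <
      ⟪pFlux p (gradient a x), gradient (kinkBump L ρ (b - a) x₀) x⟫ := by
  have hbump := inner_gradient_kinkBump_le (hb.sub ha).continuous ((hb x).sub (ha x)) hφx
    (sub_pos.2 hpos) hφ (pFlux p (gradient b x) - pFlux p (gradient a x))
  simp only [max_comm (a _)] at hmax ⊢
  rw [gradient_max_of_le (hb x) hmax hpos.le, ← sub_neg, ← inner_sub_left]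
  rw [gradient_sub (hb x) (ha x)] at hbump
  linarith

theorem inner_pFlux_gradient_max_kinkBump_le (ha : Differentiable ℝ a) (hb : Differentiable ℝ b)
    (hmax : DifferentiableAt ℝ (fun y => max (a y) (b y)) x)
    (hφx : DifferentiableAt ℝ (kinkBump L ρ (b - a) x₀) x)
    (hL : x ∈ tsupport (kinkBump L ρ (b - a) x₀) →
      ‖pFlux p (gradient b x) - pFlux p (gradient a x)‖ <
      L * ⟪pFlux p (gradient b x) - pFlux p (gradient a x), gradient b x - gradient a x⟫) :
    ⟪pFlux p (gradient (fun y => max (a y) (b y)) x), gradient (kinkBump L ρ (b - a) x₀) x⟫ ≤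
      ⟪pFlux p (gradient a x), gradient (kinkBump L ρ (b - a) x₀) x⟫ := by
  rcases le_or_gt (b x) (a x) with hle | hlt
  · rw [gradient_max_of_le (ha x) hmax hle]
  rcases (kinkBump_nonneg L ρ (b - a) x₀ x).eq_or_lt with hφ | hφ
  · rw [gradient_kinkBump_of_eq_zero hφ.symm, inner_zero_right, inner_zero_right]
  · exact (inner_pFlux_gradient_max_kinkBump_lt ha hb hmax hφx
      (hL (subset_tsupport _ hφ.ne')) hlt hφ).le

theorem exists_eventually_norm_lt_mul_inner_pFlux_sub (hp : 1 < p) (ha : ContDiff ℝ 1 a)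
    (hb : ContDiff ℝ 1 b) (hgrad : gradient a x₀ ≠ gradient b x₀) :
    ∃ L : ℝ, 0 ≤ L ∧ ∀ᶠ x in 𝓝 x₀, ‖pFlux p (gradient b x) - pFlux p (gradient a x)‖ <
      L * ⟪pFlux p (gradient b x) - pFlux p (gradient a x), gradient b x - gradient a x⟫ := by
  have hga : ContinuousAt (gradient a) x₀ := continuousAt_gradient ha.contDiffAt
  have hgb : ContinuousAt (gradient b) x₀ := continuousAt_gradient hb.contDiffAt
  have hD : ContinuousAt (fun x => pFlux p (gradient b x) - pFlux p (gradient a x)) x₀ :=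
    ((continuous_pFlux hp).continuousAt.comp hgb).sub ((continuous_pFlux hp).continuousAt.comp hga)
  have hpos := inner_pFlux_sub_pos hp hgrad
  refine ⟨(‖pFlux p (gradient b x₀) - pFlux p (gradient a x₀)‖ + 1) /
    ⟪pFlux p (gradient b x₀) - pFlux p (gradient a x₀), gradient b x₀ - gradient a x₀⟫,
    by positivity,
    hD.norm.eventually_lt (continuousAt_const.mul (hD.inner (𝕜 := ℝ) (hgb.sub hga))) ?_⟩
  rw [div_mul_cancel₀ _ hpos.ne']
  exact lt_add_one _

variable [FiniteDimensional ℝ E] [MeasurableSpace E] [BorelSpace E]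

theorem exists_integral_inner_pFlux_gradient_max_lt (hp : 1 < p) (ha : ContDiff ℝ 1 a)
    (hb : ContDiff ℝ 1 b) {A B : ℝ≥0} (haL : LipschitzWith A a) (hbL : LipschitzWith B b)
    (h₀ : a x₀ = b x₀) (hgrad : gradient a x₀ ≠ gradient b x₀) {U : Set E} (hU : U ∈ 𝓝 x₀) :
    ∃ (φ : E → ℝ) (C : ℝ≥0), LipschitzWith C φ ∧ (∀ x, 0 ≤ φ x) ∧ HasCompactSupport φ ∧
      tsupport φ ⊆ U ∧ ∫ x, ⟪pFlux p (gradient (fun y => max (a y) (b y)) x), gradient φ x⟫ <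
        ∫ x, ⟪pFlux p (gradient a x), gradient φ x⟫ := by
  have had := ha.differentiable one_ne_zero
  have hbd := hb.differentiable one_ne_zero
  obtain ⟨L, hL0, hL⟩ := exists_eventually_norm_lt_mul_inner_pFlux_sub hp ha hb hgrad
  obtain ⟨ρ, hρ, hball⟩ := nhds_basis_closedBall.mem_iff.1 (inter_mem hU hL)
  have hs := tsupport_kinkBump_subset (ρ := ρ) (d := b - a) (x₀ := x₀) hL0
  obtain ⟨C, hC⟩ := exists_lipschitzWith_kinkBump (hbL.sub haL) L ρ x₀
  have hcpt : HasCompactSupport (kinkBump L ρ (b - a) x₀) :=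
    .of_support_subset_isCompact (isCompact_closedBall x₀ ρ) ((subset_tsupport _).trans hs)
  have hint : ∀ {M : ℝ≥0} {f : E → ℝ}, LipschitzWith M f → Integrable fun x =>
      ⟪pFlux p (gradient f x), gradient (kinkBump L ρ (b - a) x₀) x⟫ := fun hf =>
    integrable_inner_pFlux_gradient hp (measurable_gradient _)
      (fun x _ => norm_gradient_le_of_lipschitz hf x) hC hcpt
  have hsub := (hbd.sub had).continuous
  have hgrad' : gradient (b - a) x₀ ≠ 0 := by
    rw [gradient_sub (hbd x₀) (had x₀), sub_ne_zero]
    exact hgrad.symm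
  refine ⟨_, C, hC, kinkBump_nonneg L ρ (b - a) x₀, hcpt, hs.trans fun x hx => (hball hx).1,
    integral_lt_integral_of_ae_le_of_measure_ne_zero (hint (haL.max hbL)) (hint haL) ?_
    (((isOpen_lt continuous_const hsub).inter (isOpen_lt continuous_const hC.continuous)
      ).measure_pos volume (exists_pos_kinkBump_pos hρ hsub (sub_eq_zero.2 h₀.symm) hgrad')).ne' ?_⟩
  · filter_upwards [hC.ae_differentiableAt, (haL.max hbL).ae_differentiableAt] with x hφx hmax
    exact inner_pFlux_gradient_max_kinkBump_le had hbd hmax hφx fun hx => (hball (hs hx)).2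
  · filter_upwards [hC.ae_differentiableAt, (haL.max hbL).ae_differentiableAt] with x hφx hmax hx
    exact inner_pFlux_gradient_max_kinkBump_lt had hbd hmax hφx
      (hball (hs (subset_tsupport _ hx.2.ne'))).2 (sub_pos.1 hx.1) hx.2

end Kink

section Radial

variable {E : Type*} [NormedAddCommGroup E] [InnerProductSpace ℝ E] {c x : E}

/-- `v` depends only on the distance to the origin. -/
def IsRadial {F β : Type*} [Norm F] (v : F → β) : Prop :=
  ∀ ⦃x y⦄, ‖x‖ = ‖y‖ → v x = v y

theorem hasGradientAt_norm [CompleteSpace E] (hx : x ≠ 0) :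
    HasGradientAt (fun y : E => ‖y‖) (‖x‖⁻¹ • x) x := by
  have hsqrt := (hasStrictFDerivAt_norm_sq x).hasFDerivAt.sqrt (by simpa using hx)
  simp only [Real.sqrt_sq (norm_nonneg _)] at hsqrt
  rw [hasGradientAt_iff_hasFDerivAt]
  refine hsqrt.congr_fderiv (ContinuousLinearMap.ext fun y => ?_)
  simp only [one_div, mul_inv_rev, smul_apply, coe_innerSL_apply, nsmul_eq_mul, Nat.cast_ofNat,
    smul_eq_mul, map_smul, InnerProductSpace.toDual_apply_apply]
  field_simp

theorem IsRadial.gradient_eq_smul [CompleteSpace E] {v : E → ℝ} (hv : IsRadial v) {e : E}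
    (he : ‖e‖ = 1) (hx : x ≠ 0) (hd : DifferentiableAt ℝ (fun r : ℝ => v (r • e)) ‖x‖) :
    gradient v x = (deriv (fun r : ℝ => v (r • e)) ‖x‖ * ‖x‖⁻¹) • x := by
  have hcomp := hd.hasDerivAt.comp_hasFDerivAt x (hasGradientAt_norm hx).hasFDerivAt
  have hderiv : HasFDerivAt v _ x :=
    hcomp.congr_of_eventuallyEq (.of_forall fun y => hv (by simp [norm_smul, he]))
  rw [gradient, hderiv.fderiv, map_smul, LinearIsometryEquiv.symm_apply_apply, smul_smul]

theorem exists_norm_eq_norm_sub_eq (hE : 1 < Module.rank ℝ E) (hc : c ≠ 0) {s r : ℝ} (hs : 0 ≤ s)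
    (hlow : |s - ‖c‖| ≤ r) (hup : r ≤ s + ‖c‖) : ∃ x : E, ‖x‖ = s ∧ ‖x - c‖ = r := by
  have hc' : ‖c‖ ≠ 0 := norm_ne_zero_iff.2 hc
  have hnorm : ∀ t : ℝ, ‖(t / ‖c‖) • c‖ = |t| := fun t => by
    rw [norm_smul, norm_div, norm_norm, div_mul_cancel₀ _ hc', Real.norm_eq_abs]
  have hsub : ∀ t : ℝ, ‖(t / ‖c‖) • c - c‖ = |t - ‖c‖| := fun t => by
    rw [← hnorm, sub_div, sub_smul, div_self hc', one_smul]
  obtain ⟨x, hx, hxr⟩ := (isPreconnected_sphere hE (0 : E) s).intermediate_value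
    (a := (s / ‖c‖) • c) (b := (-s / ‖c‖) • c) (f := fun x => ‖x - c‖)
    (by rw [mem_sphere_zero_iff_norm, hnorm, abs_of_nonneg hs])
    (by rw [mem_sphere_zero_iff_norm, hnorm, abs_neg, abs_of_nonneg hs]) (by fun_prop)
    (show r ∈ Icc _ _ by
      rw [hsub, hsub, ← neg_add', abs_neg, abs_of_nonneg (add_nonneg hs (norm_nonneg c))]
      exact ⟨hlow, hup⟩)
  exact ⟨x, mem_sphere_zero_iff_norm.1 hx, hxr⟩

theorem smul_ne_smul_sub (hcx : ‖c‖ < ‖x‖) (hlow : ‖x‖ < ‖x - c‖) (hup : ‖x - c‖ < ‖x‖ + ‖c‖)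
    {a b : ℝ} (ha : a ≠ 0) : a • x ≠ b • (x - c) := by
  intro h
  obtain ⟨k, hk⟩ : ∃ k : ℝ, x = k • (x - c) :=
    ⟨a⁻¹ * b, by rw [mul_smul, ← h, inv_smul_smul₀ ha]⟩
  have hx : ‖x‖ = |k| * ‖x - c‖ := by
    conv_lhs => rw [hk, norm_smul, Real.norm_eq_abs]
  have hc : ‖c‖ = |1 - k| * ‖x - c‖ := by
    rw [← Real.norm_eq_abs, ← norm_smul, sub_smul, one_smul, ← hk, sub_sub_cancel_left, norm_neg]
  have hpos : 0 < ‖x - c‖ := (norm_nonneg x).trans_lt hlow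
  rcases le_total 0 k with h0 | h0
  · rw [abs_of_nonneg h0] at hx
    have hk1 : k < 1 := by nlinarith
    rw [abs_of_pos (sub_pos.2 hk1)] at hc
    linarith
  · rw [abs_of_nonpos h0] at hx
    nlinarith [le_abs_self (1 - k)]

end Radial

section Peak

variable {g : ℝ → ℝ} {l m r K : ℝ}

theorem exists_lt_deriv_pos (hlm : l < m) (hg : ContinuousOn g (Icc l m)) (hl : g l ≤ K)
    (hm : K < g m) (hd : ∀ t, K < g t → DifferentiableAt ℝ g t) :
    ∃ s ∈ Ioo l m, K < g s ∧ 0 < deriv g s := by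
  have hcpt : IsCompact (Icc l m ∩ g ⁻¹' Iic K) :=
    isCompact_Icc.of_isClosed_subset (hg.preimage_isClosed_of_isClosed isClosed_Icc isClosed_Iic)
      inter_subset_left
  obtain ⟨l', ⟨hl', hgl'⟩, hmax⟩ := hcpt.exists_isGreatest ⟨l, left_mem_Icc.2 hlm.le, hl⟩
  have hl'm : l' < m := hl'.2.lt_of_ne fun h => hm.not_ge (h ▸ hgl')
  have hgt : ∀ t ∈ Ioo l' m, K < g t := fun t ht => lt_of_not_ge fun h =>
    ht.1.not_ge (hmax ⟨⟨hl'.1.trans ht.1.le, ht.2.le⟩, h⟩)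
  obtain ⟨s, hs, hderiv⟩ := exists_deriv_eq_slope g hl'm (hg.mono (Icc_subset_Icc_left hl'.1))
    fun t ht => (hd t (hgt t ht)).differentiableWithinAt
  refine ⟨s, ⟨hl'.1.trans_lt hs.1, hs.2⟩, hgt s hs, ?_⟩
  rw [hderiv]
  exact div_pos (sub_pos.2 (lt_of_le_of_lt hgl' hm)) (sub_pos.2 hl'm)

theorem exists_lt_eq_deriv_pos_of_max (hlm : l < m) (hmr : m < r) (hg : Continuous g)
    (hmax : ∀ t, g t ≤ g m) (hl : g l ≤ K) (hr : g r ≤ K) (hm : K < g m)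
    (hd : ∀ t, K < g t → DifferentiableAt ℝ g t) :
    ∃ s t, l < s ∧ s < t ∧ t < r ∧ g s = g t ∧ K < g s ∧ 0 < deriv g s := by
  obtain ⟨s, hs, hKs, hderiv⟩ := exists_lt_deriv_pos hlm hg.continuousOn hl hm hd
  obtain ⟨t, ht, hgt⟩ := intermediate_value_Icc' hmr.le hg.continuousOn ⟨hr.trans hKs.le, hmax s⟩
  have htr : t < r := ht.2.lt_of_ne fun h => hKs.not_ge (hgt ▸ h ▸ hr)
  exact ⟨s, t, hs.1, hs.2.trans_le ht.1, htr, hgt.symm, hKs, hderiv⟩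

end Peak

namespace IsPEigenfunction

variable {E : Type*} [NormedAddCommGroup E] [InnerProductSpace ℝ E] [FiniteDimensional ℝ E]
  [MeasurableSpace E] [BorelSpace E] {p α : ℝ} {v : E → ℝ} {c x : E}

theorem exists_norm_mem_Ioo_ne [Nontrivial E] (hp : 1 < p) (h : IsPEigenfunction p α v)
    {a b m : ℝ} (ha : 0 ≤ a) (hab : a < b) (hm : 0 < m) : ∃ x, ‖x‖ ∈ Ioo a b ∧ v x ≠ m := by
  obtain ⟨t, ht⟩ := exists_between hab
  obtain ⟨y, hy⟩ := exists_norm_eq E (ha.trans ht.1.le)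
  exact h.exists_ne_of_isOpen hp (isOpen_Ioo.preimage continuous_norm)
    ⟨y, by rwa [mem_preimage, hy]⟩ hm

theorem exists_profile_eq_deriv_pos (hp : 1 < p) (h : IsPEigenfunction p α v) (hv : IsRadial v)
    {e : E} (he : ‖e‖ = 1) {s : ℝ} (hs : 0 < s) (hv0 : v 0 = 0) :
    ∃ a r : ℝ, 0 < a ∧ a < r ∧ r < a + s ∧ v (a • e) = v (r • e) ∧ 0 < v (a • e) ∧
      0 < deriv (fun t : ℝ => v (t • e)) a := by
  have : Nontrivial E := nontrivial_of_ne e 0 (norm_ne_zero_iff.1 (he ▸ one_ne_zero))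
  have hve : ∀ y, v y = v (‖y‖ • e) := fun y => hv (by simp [norm_smul, he])
  obtain ⟨z, hz⟩ := h.continuous.exists_forall_ge_of_hasCompactSupport h.hasCompactSupport
  obtain ⟨y, hy⟩ := h.exists_pos
  have hmax : 0 < v z := hy.trans_le (hz y)
  have hz0 : 0 < ‖z‖ := norm_pos_iff.2 fun h0 => hmax.ne' (h0 ▸ hv0)
  obtain ⟨x₁, hx₁, hne₁⟩ := h.exists_norm_mem_Ioo_ne hp (le_max_left 0 (‖z‖ - s / 2))
    (max_lt hz0 (by linarith)) hmax
  obtain ⟨x₂, hx₂, hne₂⟩ := h.exists_norm_mem_Ioo_ne hp hz0.le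
    (show ‖z‖ < ‖z‖ + s / 2 by linarith) hmax
  obtain ⟨h0x₁, hsx₁⟩ := max_lt_iff.1 hx₁.1
  obtain ⟨a, r, ha, har, hr, heq, hpos, hderiv⟩ := exists_lt_eq_deriv_pos_of_max
    (g := fun t : ℝ => v (t • e)) (K := max (v x₁) (v x₂)) hx₁.2 hx₂.1
    (h.continuous.comp (by fun_prop)) (fun t => (hz _).trans_eq (hve z))
    (hve x₁ ▸ le_max_left _ _) (hve x₂ ▸ le_max_right _ _)
    (hve z ▸ max_lt ((hz _).lt_of_ne hne₁) ((hz _).lt_of_ne hne₂)) fun t ht =>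
      (h.differentiableAt (((h.nonneg _).trans (le_max_left _ _)).trans_lt ht)).comp
        (f := fun r : ℝ => r • e) t (by fun_prop)
  exact ⟨a, r, h0x₁.trans ha, har, by linarith [hx₂.2], heq,
    ((h.nonneg _).trans (le_max_left _ _)).trans_lt hpos, hderiv⟩

theorem exists_gradient_ne_gradient_sub (hp : 1 < p) (h : IsPEigenfunction p α v)
    (hv : IsRadial v) (hE : 1 < Module.rank ℝ E) (hc : c ≠ 0) (hcv : ∀ x, 0 < v x → ‖c‖ < ‖x‖) :
    ∃ x, 0 < v x ∧ v x = v (x - c) ∧ ‖x‖ < ‖x - c‖ ∧ gradient v x ≠ gradient v (x - c) := by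
  have hv0 : v 0 = 0 := (h.nonneg 0).antisymm' (le_of_not_gt fun h0 =>
    (norm_nonneg c).not_gt (norm_zero (E := E) ▸ hcv 0 h0))
  have he : ‖‖c‖⁻¹ • c‖ = 1 := norm_smul_inv_norm (𝕜 := ℝ) hc
  set e := ‖c‖⁻¹ • c
  obtain ⟨a, r, ha, har, hra, heq, hpos, hderiv⟩ :=
    h.exists_profile_eq_deriv_pos hp hv he (norm_pos_iff.2 hc) hv0
  have hve : ∀ {t y}, 0 ≤ t → ‖y‖ = t → v y = v (t • e) := fun ht hy =>
    hv (by rw [hy, norm_smul, he, mul_one, Real.norm_of_nonneg ht])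
  have hca : ‖c‖ < a := by simpa [norm_smul, he, abs_of_pos ha] using hcv _ hpos
  obtain ⟨x, hxa, hxr⟩ := exists_norm_eq_norm_sub_eq hE hc ha.le
    (by rw [abs_of_pos (sub_pos.2 hca)]; linarith [norm_nonneg c]) hra.le
  have hdiff : ∀ t : ℝ, 0 < v (t • e) → DifferentiableAt ℝ (fun t : ℝ => v (t • e)) t :=
    fun t ht => (h.differentiableAt ht).comp (f := fun r : ℝ => r • e) t (by fun_prop)
  refine ⟨x, hve ha.le hxa ▸ hpos, by rw [hve ha.le hxa, hve (ha.trans har).le hxr, heq],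
    by rwa [hxa, hxr], ?_⟩
  rw [hv.gradient_eq_smul he (norm_pos_iff.1 (hxa ▸ ha)) (hxa ▸ hdiff a hpos),
    hv.gradient_eq_smul he (norm_pos_iff.1 (hxr ▸ ha.trans har)) (hxr ▸ hdiff r (heq ▸ hpos)),
    hxa, hxr]
  exact smul_ne_smul_sub (hxa ▸ hca) (by rwa [hxa, hxr]) (by rwa [hxa, hxr])
    (mul_ne_zero hderiv.ne' (inv_ne_zero ha.ne'))

theorem exists_integral_inner_pFlux_gradient_max_sub_lt (hp : 1 < p) (h : IsPEigenfunction p α v)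
    (hv : IsRadial v) (hE : 1 < Module.rank ℝ E) (hc : c ≠ 0) (hcv : ∀ x, 0 < v x → ‖c‖ < ‖x‖) :
    ∃ (δ : ℝ) (φ : E → ℝ) (C : ℝ≥0), 0 < δ ∧ LipschitzWith C φ ∧ (∀ x, 0 ≤ φ x) ∧
      HasCompactSupport φ ∧ tsupport φ ⊆ {x | ‖x‖ < ‖x - c‖ ∧ 2 * δ < v x} ∧
      ∫ x, ⟪pFlux p (gradient (fun y => max (softTrunc δ (v y)) (softTrunc δ (v (y - c)))) x),
        gradient φ x⟫ < ∫ x, ⟪pFlux p (gradient (softTrunc δ ∘ v) x), gradient φ x⟫ := by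
  obtain ⟨x₀, hx₀, heq, hlt, hgrad⟩ := h.exists_gradient_ne_gradient_sub hp hv hE hc hcv
  have hδ : 0 < v x₀ / 4 := by positivity
  have hδx₀ : 2 * (v x₀ / 4) < v x₀ := by linarith
  set δ := v x₀ / 4
  have ha := contDiff_softTrunc_comp hδ h.continuous h.contDiffOn
  obtain ⟨C, hC⟩ := h.exists_lipschitzWith_softTrunc_comp hδ
  have hsub : LipschitzWith 1 fun x : E => x - c := (IsometryEquiv.subRight c).isometry.lipschitz
  have hgsub : gradient (fun y => (softTrunc δ ∘ v) (y - c)) x₀ =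
      gradient (softTrunc δ ∘ v) (x₀ - c) := by
    rw [gradient, fderiv_comp_sub, gradient]
  have hU : {x | ‖x‖ < ‖x - c‖ ∧ 2 * δ < v x} ∈ 𝓝 x₀ :=
    ((isOpen_lt continuous_norm (by fun_prop)).inter
      (isOpen_lt continuous_const h.continuous)).mem_nhds ⟨hlt, hδx₀⟩
  obtain ⟨φ, D, hφ, hφ0, hφc, hφs, hφlt⟩ := exists_integral_inner_pFlux_gradient_max_lt hp ha
    (b := fun x => (softTrunc δ ∘ v) (x - c)) (ha.comp (contDiff_id.sub contDiff_const)) hC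
    (hC.comp hsub) (x₀ := x₀) (by simp only [Function.comp_apply, heq])
    (by rwa [hgsub, gradient_softTrunc_comp_of_lt hδ h.continuous hδx₀,
      gradient_softTrunc_comp_of_lt hδ h.continuous (heq ▸ hδx₀)]) hU
  exact ⟨δ, φ, D, hδ, hφ, hφ0, hφc, hφs, hφlt⟩

theorem admitsRayleighLT_polarize (hp : 1 < p) (h : IsPEigenfunction p α v)
    (hv : IsRadial v) (hE : 1 < Module.rank ℝ E) (hc : c ≠ 0) (hcv : ∀ x, 0 < v x → ‖c‖ < ‖x‖) :
    AdmitsRayleighLT p α {x | 0 < polarize c v x} := by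
  have : Nontrivial E := nontrivial_of_ne c 0 hc
  obtain ⟨δ, φ, C, hδ, hφ, hφ0, hφc, hφs, hlt⟩ :=
    h.exists_integral_inner_pFlux_gradient_max_sub_lt hp hv hE hc hcv
  have hpol : ∀ {x}, ‖x‖ < ‖x - c‖ → polarize c v x = max (v x) (v (x - c)) := fun hx => by
    rw [polarize_of_le hx.le, hv (norm_bisectorReflection c _)]
  have hle : ∀ {x}, ‖x‖ < ‖x - c‖ → v x ≤ polarize c v x := fun hx =>
    hpol hx ▸ le_max_left _ _
  refine ((h.truncRayleighLE hp).polarize hp hc).admitsRayleighLT_of_integral_lt hp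
    (h.eigenvalue_pos hp).le hφ hφ0 hφc hδ (fun x hx => (hφs hx).2.trans_le (hle (hφs hx).1)) ?_
  have hgpol : ∀ x ∈ tsupport φ, gradient (softTrunc δ ∘ polarize c v) x =
      gradient (fun y => max (softTrunc δ (v y)) (softTrunc δ (v (y - c)))) x := fun x hx => by
    refine Filter.EventuallyEq.gradient_eq ?_
    have hnear : IsOpen {y | ‖y‖ < ‖y - c‖} := isOpen_lt continuous_norm (by fun_prop)
    filter_upwards [hnear.mem_nhds (hφs hx).1] with y hy
    rw [Function.comp_apply, hpol hy, (monotone_softTrunc δ).map_max]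
  calc ∫ x, ⟪pFlux p (gradient (softTrunc δ ∘ polarize c v) x), gradient φ x⟫
      = ∫ x, ⟪pFlux p (gradient (fun y => max (softTrunc δ (v y)) (softTrunc δ (v (y - c)))) x),
          gradient φ x⟫ :=
        integral_inner_gradient_congr fun x hx => by rw [hgpol x hx]
    _ < ∫ x, ⟪pFlux p (gradient (softTrunc δ ∘ v) x), gradient φ x⟫ := hlt
    _ = ∫ x, ⟪pFlux p (gradient v x), gradient φ x⟫ :=
        integral_inner_gradient_congr fun x hx => by
          rw [gradient_softTrunc_comp_of_lt hδ h.continuous (hφs hx).2]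
    _ = α * ∫ x, v x ^ (p - 1) * φ x :=
        h.weak_of_lipschitz hp hφ hφc fun x hx => (mul_pos two_pos hδ).trans (hφs hx).2
    _ ≤ α * ∫ x, polarize c v x ^ (p - 1) * φ x := by
        refine mul_le_mul_of_nonneg_left ?_ (h.eigenvalue_pos hp).le
        exact integral_rpow_mul_le_of_le_on_tsupport (sub_pos.2 hp) h.continuous h.nonneg
          (continuous_polarize h.continuous c) hφ.continuous hφ0 hφc fun x hx => hle (hφs hx).1

end IsPEigenfunction

theorem ball_diff_closure_ball_zero {E : Type*} [NormedAddCommGroup E] [NormedSpace ℝ E]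
    {R₀ R₁ : ℝ} (hR₀ : R₀ ≠ 0) :
    ball (0 : E) R₁ \ closure (ball 0 R₀) = norm ⁻¹' Ioo R₀ R₁ := by
  ext x
  rw [closure_ball _ hR₀]
  simp [and_comm]

section NodalDomains

variable {E : Type*} [NormedAddCommGroup E]

theorem norm_lt_norm_or_of_isPreconnected {P M : Set E} (hP : IsPreconnected P)
    (hM : IsPreconnected M) (hne : ∀ x ∈ P, ∀ y ∈ M, ‖x‖ ≠ ‖y‖) :
    (∀ x ∈ P, ∀ y ∈ M, ‖x‖ < ‖y‖) ∨ ∀ x ∈ P, ∀ y ∈ M, ‖y‖ < ‖x‖ := by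
  by_contra! ⟨⟨x, hx, y, hy, hyx⟩, x', hx', y', hy', hxy'⟩
  obtain ⟨⟨a, b⟩, ⟨ha, hb⟩, hab⟩ := (hP.prod hM).intermediate_value₂ (a := (x', y')) (b := (x, y))
    ⟨hx', hy'⟩ ⟨hx, hy⟩ (continuous_fst.norm.continuousOn) (continuous_snd.norm.continuousOn)
    hxy' hyx
  exact hne a ha b hb hab

theorem exists_forall_norm_lt_lt_norm [NormedSpace ℝ E] [Nontrivial E] {P M : Set E}
    (hPo : IsOpen P) (hMo : IsOpen M) (hP : P.Nonempty) (hM : M.Nonempty)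
    (hlt : ∀ x ∈ P, ∀ y ∈ M, ‖x‖ < ‖y‖) :
    ∃ a, (∀ x ∈ P, ‖x‖ < a) ∧ ∀ y ∈ M, a < ‖y‖ := by
  obtain ⟨a, haP, haM⟩ := exists_between_of_forall_le (hP.image norm) (hM.image norm) (by
    rintro _ ⟨x, hx, rfl⟩ _ ⟨y, hy, rfl⟩
    exact (hlt x hx y hy).le)
  have hPa : P ⊆ ball 0 a := interior_closedBall' (0 : E) a ▸ hPo.subset_interior_iff.2
    fun x hx => mem_closedBall_zero_iff.2 (haP ⟨x, hx, rfl⟩)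
  obtain ⟨x, hx⟩ := hP
  have ha : 0 < a := (norm_nonneg x).trans_lt (mem_ball_zero_iff.1 (hPa hx))
  have hMa : M ⊆ (closedBall 0 a)ᶜ := by
    rw [← closure_ball (0 : E) ha.ne', ← interior_compl]
    exact hMo.subset_interior_iff.2 fun y hy hya =>
      (mem_ball_zero_iff.1 hya).not_ge (haM ⟨y, hy, rfl⟩)
  exact ⟨a, fun x hx => mem_ball_zero_iff.1 (hPa hx),
    fun y hy => not_le.1 fun h => hMa hy (mem_closedBall_zero_iff.2 h)⟩

end NodalDomains

section PositivePart

theorem indicator_max_zero_pos_iff {X : Type*} {Ω : Set X} {u : X → ℝ} {x : X} :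
    0 < Ω.indicator (fun y => max (u y) 0) x ↔ x ∈ {y ∈ Ω | 0 < u y} := by
  by_cases hx : x ∈ Ω <;> simp [hx]

theorem IsRadial.indicator_max_zero {F : Type*} [Norm F] {Ω : Set F} {u : F → ℝ}
    (hΩ : IsRadial (· ∈ Ω)) (hu : IsRadial u) :
    IsRadial (Ω.indicator fun y => max (u y) 0) := fun x y hxy => by
  classical
  have hmem : x ∈ Ω ↔ y ∈ Ω := iff_of_eq (hΩ hxy)
  simp only [indicator_apply, hmem, hu hxy]

end PositivePart

section FucikSolution

variable {E : Type*} [NormedAddCommGroup E] [InnerProductSpace ℝ E] [FiniteDimensional ℝ E]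
  [MeasurableSpace E] [BorelSpace E] {p α β : ℝ} {Ω : Set E} {u : E → ℝ}

/-- `u` is a weak solution of the Fučik problem `-Δ_p u = α (u⁺)^(p-1) - β (u⁻)^(p-1)` in `Ω`,
continuous up to the boundary, where it vanishes, and of class `C¹` inside. -/
structure IsFucikSolution (p α β : ℝ) (Ω : Set E) (u : E → ℝ) : Prop where
  continuousOn : ContinuousOn u (closure Ω)
  contDiffOn : ContDiffOn ℝ 1 u Ω
  eq_zero_of_mem_frontier : ∀ x ∈ frontier Ω, u x = 0
  weak : ∀ φ : E → ℝ, ContDiff ℝ (⊤ : ℕ∞) φ → HasCompactSupport φ → tsupport φ ⊆ Ω →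
    ∫ x in Ω, ‖gradient u x‖ ^ (p - 2) * ⟪gradient u x, gradient φ x⟫ =
      ∫ x in Ω, (α * max (u x) 0 ^ (p - 1) - β * max (-u x) 0 ^ (p - 1)) * φ x

namespace IsFucikSolution

theorem neg (h : IsFucikSolution p α β Ω u) : IsFucikSolution p β α Ω (-u) where
  continuousOn := h.continuousOn.neg
  contDiffOn := h.contDiffOn.neg
  eq_zero_of_mem_frontier x hx := by
    rw [Pi.neg_apply, h.eq_zero_of_mem_frontier x hx, neg_zero]
  weak φ hφ hc hs := by
    have hgrad : ∀ x, gradient (-u) x = -gradient u x := fun x => by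
      rw [gradient, fderiv_neg, map_neg, gradient]
    simp only [hgrad, norm_neg, inner_neg_left, mul_neg, Pi.neg_apply, neg_neg]
    rw [integral_neg, h.weak φ hφ hc hs, ← integral_neg]
    simp only [← neg_mul, neg_sub]

theorem isOpen_pos (h : IsFucikSolution p α β Ω u) (hΩ : IsOpen Ω) : IsOpen {x ∈ Ω | 0 < u x} :=
  (h.continuousOn.mono subset_closure).isOpen_inter_preimage hΩ isOpen_Ioi

theorem indicator_max_zero_eventuallyEq (h : IsFucikSolution p α β Ω u) (hΩ : IsOpen Ω) {x : E}
    (hx : x ∈ {x ∈ Ω | 0 < u x}) : Ω.indicator (fun y => max (u y) 0) =ᶠ[𝓝 x] u := by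
  filter_upwards [(h.isOpen_pos hΩ).mem_nhds hx] with y hy
  rw [indicator_of_mem hy.1, max_eq_left hy.2.le]

theorem weak_indicator_max_zero (hp : 1 < p) (h : IsFucikSolution p α β Ω u) (hΩ : IsOpen Ω)
    {φ : E → ℝ} (hφ : ContDiff ℝ (⊤ : ℕ∞) φ) (hc : HasCompactSupport φ)
    (hs : tsupport φ ⊆ {x ∈ Ω | 0 < u x}) :
    ∫ x, ⟪pFlux p (gradient (Ω.indicator fun y => max (u y) 0) x), gradient φ x⟫ =
      α * ∫ x, Ω.indicator (fun y => max (u y) 0) x ^ (p - 1) * φ x := by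
  have hφΩ : ∀ {x}, x ∉ Ω → x ∉ tsupport φ := fun hx hxφ => hx (hs hxφ).1
  calc ∫ x, ⟪pFlux p (gradient (Ω.indicator fun y => max (u y) 0) x), gradient φ x⟫
      = ∫ x, ⟪pFlux p (gradient u x), gradient φ x⟫ :=
        integral_inner_gradient_congr fun x hx => by
          rw [(h.indicator_max_zero_eventuallyEq hΩ (hs hx)).gradient_eq]
    _ = ∫ x in Ω, ‖gradient u x‖ ^ (p - 2) * ⟪gradient u x, gradient φ x⟫ := by
        simp only [pFlux, real_inner_smul_left]
        refine (setIntegral_eq_integral_of_forall_compl_eq_zero fun x hx => ?_).symm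
        rw [gradient_eq_zero_of_notMem_tsupport (hφΩ hx), inner_zero_right, mul_zero]
    _ = ∫ x in Ω, (α * max (u x) 0 ^ (p - 1) - β * max (-u x) 0 ^ (p - 1)) * φ x :=
        h.weak φ hφ hc fun x hx => (hs hx).1
    _ = ∫ x, (α * max (u x) 0 ^ (p - 1) - β * max (-u x) 0 ^ (p - 1)) * φ x :=
        setIntegral_eq_integral_of_forall_compl_eq_zero fun x hx => by
          rw [image_eq_zero_of_notMem_tsupport (hφΩ hx), mul_zero]
    _ = ∫ x, α * (Ω.indicator (fun y => max (u y) 0) x ^ (p - 1) * φ x) := by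
        refine integral_congr_ae (.of_forall fun x => ?_)
        by_cases hx : x ∈ tsupport φ
        · obtain ⟨hxΩ, hux⟩ := hs hx
          simp only [indicator_of_mem hxΩ, max_eq_right (neg_nonpos.2 hux.le),
            Real.zero_rpow (sub_pos.2 hp).ne', mul_zero, sub_zero, mul_assoc]
        · simp only [image_eq_zero_of_notMem_tsupport hx, mul_zero]
    _ = α * ∫ x, Ω.indicator (fun y => max (u y) 0) x ^ (p - 1) * φ x := integral_const_mul _ _

theorem isPEigenfunction_indicator_max_zero (hp : 1 < p) (h : IsFucikSolution p α β Ω u)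
    (hΩ : IsOpen Ω) (hb : Bornology.IsBounded Ω) (hne : {x ∈ Ω | 0 < u x}.Nonempty) :
    IsPEigenfunction p α (Ω.indicator fun y => max (u y) 0) where
  continuous := continuous_indicator
    (fun x hx => by rw [h.eq_zero_of_mem_frontier x hx, max_self])
    (h.continuousOn.sup continuousOn_const)
  nonneg := indicator_nonneg fun _ _ => le_max_right _ _
  hasCompactSupport := .of_support_subset_isCompact hb.isCompact_closure
    (support_indicator_subset.trans subset_closure)
  contDiffOn := by
    simp only [indicator_max_zero_pos_iff, ofPred_mem_eq]
    exact (h.contDiffOn.mono fun x hx => hx.1).congr fun x hx =>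
      (h.indicator_max_zero_eventuallyEq hΩ hx).eq_of_nhds
  exists_pos := hne.imp fun _ hx => indicator_max_zero_pos_iff.2 hx
  weak φ hφ hc hs := h.weak_indicator_max_zero hp hΩ hφ hc
    (hs.trans fun _ => indicator_max_zero_pos_iff.1)

theorem exists_isPEigenfunction_pair [Nontrivial E] (hp : 1 < p) (h : IsFucikSolution p α β Ω u)
    (hu : IsRadial u) (hΩ : IsOpen Ω) (hb : Bornology.IsBounded Ω) (hr : IsRadial (· ∈ Ω))
    (hpos : {x ∈ Ω | 0 < u x}.Nonempty) (hneg : {x ∈ Ω | u x < 0}.Nonempty)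
    (hlt : ∀ x ∈ {x ∈ Ω | 0 < u x}, ∀ y ∈ {x ∈ Ω | u x < 0}, ‖x‖ < ‖y‖) :
    ∃ (a : ℝ) (v w : E → ℝ), IsPEigenfunction p α v ∧ IsRadial v ∧ IsPEigenfunction p β w ∧
      IsRadial w ∧ (∀ x, 0 < v x → x ∈ Ω ∧ ‖x‖ < a) ∧ ∀ x, 0 < w x → x ∈ Ω ∧ a < ‖x‖ := by
  have hset : {x ∈ Ω | 0 < (-u) x} = {x ∈ Ω | u x < 0} := by simp only [Pi.neg_apply, neg_pos]
  obtain ⟨a, hPa, hMa⟩ := exists_forall_norm_lt_lt_norm (h.isOpen_pos hΩ)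
    (hset ▸ h.neg.isOpen_pos hΩ) hpos hneg hlt
  refine ⟨a, _, _, h.isPEigenfunction_indicator_max_zero hp hΩ hb hpos, .indicator_max_zero hr hu,
    h.neg.isPEigenfunction_indicator_max_zero hp hΩ hb (hset ▸ hneg),
    .indicator_max_zero hr fun x y hxy => congrArg Neg.neg (hu hxy), fun x hx => ?_, fun x hx => ?_⟩
  · rw [indicator_max_zero_pos_iff] at hx
    exact ⟨hx.1, hPa x hx⟩
  · rw [indicator_max_zero_pos_iff, hset] at hx
    exact ⟨hx.1, hMa x hx⟩

end IsFucikSolution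

end FucikSolution

section DisjointSubdomains

variable {E : Type*} [NormedAddCommGroup E] [InnerProductSpace ℝ E] {c x : E} {v w : E → ℝ}

theorem norm_mem_of_polarize_pos {I : Set ℝ} (hI : IsLowerSet I) (hv : ∀ x, 0 < v x → ‖x‖ ∈ I)
    (hx : 0 < polarize c v x) : ‖x‖ ∈ I := by
  have hσ : 0 < v (bisectorReflection c x) → ‖x - c‖ ∈ I := fun h =>
    norm_bisectorReflection c x ▸ hv _ h
  rcases le_or_gt ‖x‖ ‖x - c‖ with hle | hlt
  · rw [polarize_of_le hle, lt_max_iff] at hx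
    exact hx.elim (hv x) fun h => hI hle (hσ h)
  · rw [polarize_of_lt hlt, lt_min_iff] at hx
    exact hv x hx.1

theorem norm_sub_mem_of_polarize_pos {I : Set ℝ} (hI : IsUpperSet I)
    (hv : ∀ x, 0 < v x → ‖x‖ ∈ I) (hx : 0 < polarize c v x) : ‖x - c‖ ∈ I := by
  have hσ : 0 < v (bisectorReflection c x) → ‖x - c‖ ∈ I := fun h =>
    norm_bisectorReflection c x ▸ hv _ h
  rcases le_or_gt ‖x‖ ‖x - c‖ with hle | hlt
  · rw [polarize_of_le hle, lt_max_iff] at hx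
    exact hx.elim (fun h => hI hle (hv x h)) hσ
  · rw [polarize_of_lt hlt, lt_min_iff] at hx
    exact hσ hx.2

variable [FiniteDimensional ℝ E] [MeasurableSpace E] [BorelSpace E] {p α β a R₀ R₁ : ℝ} {Ω : Set E}

/-- `Ω` contains two disjoint open sets carrying test functions with `p`-Rayleigh quotients below
`α` and `β` respectively. -/
def AdmitsDisjointRayleighLT (p α β : ℝ) (Ω : Set E) : Prop :=
  ∃ Ω₁ Ω₂ : Set E, IsOpen Ω₁ ∧ IsOpen Ω₂ ∧ Disjoint Ω₁ Ω₂ ∧ Ω₁ ⊆ Ω ∧ Ω₂ ⊆ Ω ∧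
    AdmitsRayleighLT p α Ω₁ ∧ AdmitsRayleighLT p β Ω₂

theorem AdmitsDisjointRayleighLT.symm (h : AdmitsDisjointRayleighLT p α β Ω) :
    AdmitsDisjointRayleighLT p β α Ω :=
  let ⟨Ω₁, Ω₂, ho₁, ho₂, hd, hs₁, hs₂, h₁, h₂⟩ := h
  ⟨Ω₂, Ω₁, ho₂, ho₁, hd.symm, hs₂, hs₁, h₂, h₁⟩

theorem IsPEigenfunction.admitsDisjointRayleighLT_annulus (hE : 1 < Module.rank ℝ E) (hp : 1 < p)
    (hR₀ : 0 < R₀) (hv : IsPEigenfunction p α v) (hvr : IsRadial v) (hw : IsPEigenfunction p β w)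
    (hwr : IsRadial w) (hvs : ∀ x, 0 < v x → R₀ < ‖x‖ ∧ ‖x‖ < a)
    (hws : ∀ x, 0 < w x → a < ‖x‖ ∧ ‖x‖ < R₁) :
    AdmitsDisjointRayleighLT p α β ((norm : E → ℝ) ⁻¹' Ioo R₀ R₁) := by
  have : Nontrivial E := (rank_pos_iff_nontrivial (R := ℝ)).1 (zero_lt_one.trans hE)
  have hR₀a : R₀ < a := let ⟨x, hx⟩ := hv.exists_pos; (hvs x hx).1.trans (hvs x hx).2
  have haR₁ : a < R₁ := let ⟨x, hx⟩ := hw.exists_pos; (hws x hx).1.trans (hws x hx).2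
  obtain ⟨s, hs, hsm⟩ := exists_between
    (lt_min hR₀ (lt_min (sub_pos.2 hR₀a) (sub_pos.2 haR₁)))
  obtain ⟨hsR₀, hsa, hsR₁⟩ : s < R₀ ∧ s < a - R₀ ∧ s < R₁ - a := by simpa using hsm
  obtain ⟨c, rfl⟩ := exists_norm_eq E hs.le
  have hc : c ≠ 0 := norm_pos_iff.1 hs
  have hV : ∀ x, 0 < polarize (-c) v (x - c) → R₀ < ‖x‖ ∧ ‖x - c‖ < a := fun x hx =>
    ⟨by simpa using norm_sub_mem_of_polarize_pos (isUpperSet_Ioi R₀) (fun y hy => (hvs y hy).1) hx,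
      norm_mem_of_polarize_pos (isLowerSet_Iio a) (fun y hy => (hvs y hy).2) hx⟩
  have hW : ∀ x, 0 < polarize c w x → a < ‖x - c‖ ∧ ‖x‖ < R₁ := fun x hx =>
    ⟨norm_sub_mem_of_polarize_pos (isUpperSet_Ioi a) (fun y hy => (hws y hy).1) hx,
      norm_mem_of_polarize_pos (isLowerSet_Iio R₁) (fun y hy => (hws y hy).2) hx⟩
  refine ⟨(· - c) ⁻¹' {x | 0 < polarize (-c) v x}, {x | 0 < polarize c w x},
    (isOpen_lt continuous_const (continuous_polarize hv.continuous _)).preimage (by fun_prop),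
    isOpen_lt continuous_const (continuous_polarize hw.continuous c),
    disjoint_left.2 fun x hx hx' => (hV x hx).2.asymm (hW x hx').1, fun x hx => ?_, fun x hx => ?_,
    (hv.admitsRayleighLT_polarize hp hvr hE (neg_ne_zero.2 hc) fun x hx => ?_).preimage_sub_right c,
    hw.admitsRayleighLT_polarize hp hwr hE hc fun x hx => by linarith [hws x hx]⟩
  · exact ⟨(hV x hx).1, by linarith [norm_le_norm_sub_add x c, hV x hx]⟩
  · exact ⟨by linarith [norm_sub_le x c, hW x hx], (hW x hx).2⟩
  · rw [norm_neg]
    exact hsR₀.trans (hvs x hx).1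

/- Polarizing `v` would require `v` to vanish near `0`. Instead, `v` is translated by `c` and
dilated: the support of the test function for `w` is compact in `{a < ‖x - c‖}`, which leaves room
for a dilation, and dilating lowers the Rayleigh quotient. -/
theorem IsPEigenfunction.admitsDisjointRayleighLT_ball (hE : 1 < Module.rank ℝ E) (hp : 1 < p)
    (hv : IsPEigenfunction p α v) (hw : IsPEigenfunction p β w) (hwr : IsRadial w)
    (hvs : ∀ x, 0 < v x → ‖x‖ < a) (hws : ∀ x, 0 < w x → a < ‖x‖ ∧ ‖x‖ < R₁) :
    AdmitsDisjointRayleighLT p α β ((norm : E → ℝ) ⁻¹' Iio R₁) := by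
  have : Nontrivial E := (rank_pos_iff_nontrivial (R := ℝ)).1 (zero_lt_one.trans hE)
  have ha : 0 < a := let ⟨x, hx⟩ := hv.exists_pos; (norm_nonneg x).trans_lt (hvs x hx)
  have haR₁ : a < R₁ := let ⟨x, hx⟩ := hw.exists_pos; (hws x hx).1.trans (hws x hx).2
  obtain ⟨s, hs, hsm⟩ := exists_between (lt_min ha (sub_pos.2 haR₁))
  obtain ⟨hsa, hsR₁⟩ := lt_min_iff.1 hsm
  obtain ⟨c, rfl⟩ := exists_norm_eq E hs.le
  obtain ⟨K, hK, hKw, hKlt⟩ := (hw.admitsRayleighLT_polarize hp hwr hE (norm_pos_iff.1 hs)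
    fun x hx => hsa.trans (hws x hx).1).exists_isCompact
  obtain ⟨b, hab, hb⟩ := hK.exists_forall_le' (f := fun x => ‖x - c‖) (by fun_prop) fun x hx =>
    norm_sub_mem_of_polarize_pos (isUpperSet_Ioi a) (fun y hy => (hws y hy).1) (hKw hx)
  obtain ⟨r, har, hr⟩ := exists_between (lt_min hab (lt_sub_comm.1 hsR₁))
  obtain ⟨hrb, hrR₁⟩ := lt_min_iff.1 hr
  have hr0 : 0 < r := ha.trans har
  have hV : ∀ x, 0 < v ((a / r) • (x - c)) → ‖x - c‖ < r := fun x hx => by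
    have hlt := hvs _ hx
    rwa [norm_smul, Real.norm_of_nonneg (by positivity), div_mul_eq_mul_div, div_lt_iff₀ hr0,
      mul_lt_mul_iff_right₀ ha] at hlt
  refine ⟨{x | 0 < v ((a / r) • (x - c))}, {x | 0 < polarize c w x} ∩ {x | r < ‖x - c‖},
    isOpen_lt continuous_const (hv.continuous.comp (by fun_prop)),
    (isOpen_lt continuous_const (continuous_polarize hw.continuous c)).inter
      (isOpen_lt continuous_const (by fun_prop)),
    disjoint_left.2 fun x hx hx' => (hV x hx).asymm hx'.2, fun x hx => ?_, fun x hx => ?_,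
    (hv.truncRayleighLE hp).admitsRayleighLT_comp_smul_sub hp (hv.eigenvalue_pos hp)
      (hv.integral_rpow_pos (zero_lt_one.trans hp)) (div_pos ha hr0) ((div_lt_one hr0).2 har) c,
    hKlt fun x hx => ⟨hKw hx, hrb.trans_le (hb x hx)⟩⟩
  · exact (norm_le_norm_sub_add x c).trans_lt (lt_sub_iff_add_lt.1 ((hV x hx).trans hrR₁))
  · exact norm_mem_of_polarize_pos (isLowerSet_Iio R₁) (fun y hy => (hws y hy).2) hx.1

theorem IsFucikSolution.admitsDisjointRayleighLT_of_norm_lt (hE : 1 < Module.rank ℝ E)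
    (hp : 1 < p) {u : E → ℝ}
    (hΩ : (∃ R₁, Ω = norm ⁻¹' Iio R₁) ∨ ∃ R₀ R₁, 0 < R₀ ∧ Ω = norm ⁻¹' Ioo R₀ R₁)
    (h : IsFucikSolution p α β Ω u) (hu : IsRadial u) (hpos : {x ∈ Ω | 0 < u x}.Nonempty)
    (hneg : {x ∈ Ω | u x < 0}.Nonempty)
    (hlt : ∀ x ∈ {x ∈ Ω | 0 < u x}, ∀ y ∈ {x ∈ Ω | u x < 0}, ‖x‖ < ‖y‖) :
    AdmitsDisjointRayleighLT p α β Ω := by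
  have : Nontrivial E := (rank_pos_iff_nontrivial (R := ℝ)).1 (zero_lt_one.trans hE)
  rcases hΩ with ⟨R₁, rfl⟩ | ⟨R₀, R₁, hR₀, rfl⟩
  · obtain ⟨a, v, w, hv, -, hw, hwr, hvs, hws⟩ := h.exists_isPEigenfunction_pair hp hu
      (isOpen_Iio.preimage continuous_norm)
      (isBounded_ball.subset fun x hx => mem_ball_zero_iff.2 hx)
      (fun x y hxy => by simp only [mem_preimage, hxy]) hpos hneg hlt
    exact hv.admitsDisjointRayleighLT_ball hE hp hw hwr (fun x hx => (hvs x hx).2)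
      fun x hx => (hws x hx).symm
  · obtain ⟨a, v, w, hv, hvr, hw, hwr, hvs, hws⟩ := h.exists_isPEigenfunction_pair hp hu
      (isOpen_Ioo.preimage continuous_norm)
      (isBounded_ball.subset fun x hx => mem_ball_zero_iff.2 hx.2)
      (fun x y hxy => by simp only [mem_preimage, hxy]) hpos hneg hlt
    exact hv.admitsDisjointRayleighLT_annulus hE hp hR₀ hvr hw hwr
      (fun x hx => ⟨(hvs x hx).1.1, (hvs x hx).2⟩) fun x hx => ⟨(hws x hx).2, (hws x hx).1.2⟩

theorem IsFucikSolution.admitsDisjointRayleighLT (hE : 1 < Module.rank ℝ E) (hp : 1 < p)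
    {u : E → ℝ} (hΩ : (∃ R₁, Ω = norm ⁻¹' Iio R₁) ∨ ∃ R₀ R₁, 0 < R₀ ∧ Ω = norm ⁻¹' Ioo R₀ R₁)
    (h : IsFucikSolution p α β Ω u) (hu : IsRadial u) (hpos : IsConnected {x ∈ Ω | 0 < u x})
    (hneg : IsConnected {x ∈ Ω | u x < 0}) : AdmitsDisjointRayleighLT p α β Ω := by
  have hne : ∀ x ∈ {x ∈ Ω | 0 < u x}, ∀ y ∈ {x ∈ Ω | u x < 0}, ‖x‖ ≠ ‖y‖ := fun x hx y hy hxy =>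
    hx.2.asymm (hu hxy ▸ hy.2)
  rcases norm_lt_norm_or_of_isPreconnected hpos.isPreconnected hneg.isPreconnected hne
    with hlt | hlt
  · exact h.admitsDisjointRayleighLT_of_norm_lt hE hp hΩ hu hpos.nonempty hneg.nonempty hlt
  · have hpos' : {x ∈ Ω | 0 < (-u) x} = {x ∈ Ω | u x < 0} := by simp only [Pi.neg_apply, neg_pos]
    have hneg' : {x ∈ Ω | (-u) x < 0} = {x ∈ Ω | 0 < u x} := by
      simp only [Pi.neg_apply, neg_neg_iff_pos]
    refine (h.neg.admitsDisjointRayleighLT_of_norm_lt hE hp hΩ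
      (fun x y hxy => congrArg Neg.neg (hu hxy)) (hpos' ▸ hneg.nonempty)
      (hneg' ▸ hpos.nonempty) ?_).symm
    rw [hpos', hneg']
    exact fun y hy x hx => hlt x hx y hy

end DisjointSubdomains

theorem stmt9 (N : ℕ) (hN : 2 ≤ N) (p : ℝ) (hp : 1 < p)
    (Ω : Set (EuclideanSpace ℝ (Fin N)))
    (hΩ : (∃ R₁ : ℝ, 0 < R₁ ∧ Ω = ball 0 R₁) ∨
          (∃ R₀ R₁ : ℝ, 0 < R₀ ∧ R₀ < R₁ ∧ Ω = ball 0 R₁ \ closure (ball 0 R₀)))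
    (α β : ℝ) (u : EuclideanSpace ℝ (Fin N) → ℝ)
    (hcont : ContinuousOn u (closure Ω))
    (hC1 : ContDiffOn ℝ 1 u Ω)
    (hrad : ∀ x y : EuclideanSpace ℝ (Fin N), ‖x‖ = ‖y‖ → u x = u y)
    (hbd : ∀ x ∈ frontier Ω, u x = 0)
    (hpos : IsConnected {x ∈ Ω | 0 < u x})
    (hneg : IsConnected {x ∈ Ω | u x < 0})
    (hweak : ∀ φ : EuclideanSpace ℝ (Fin N) → ℝ, ContDiff ℝ (⊤ : ℕ∞) φ → HasCompactSupport φ →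
      tsupport φ ⊆ Ω →
      ∫ x in Ω, ‖gradient u x‖ ^ (p - 2) * ⟪gradient u x, gradient φ x⟫ =
        ∫ x in Ω, (α * max (u x) 0 ^ (p - 1) - β * max (-u x) 0 ^ (p - 1)) * φ x) :
    ∃ Ω₁ Ω₂ : Set (EuclideanSpace ℝ (Fin N)),
      IsOpen Ω₁ ∧ IsOpen Ω₂ ∧ Ω₁.Nonempty ∧ Ω₂.Nonempty ∧ Disjoint Ω₁ Ω₂ ∧
      Ω₁ ⊆ Ω ∧ Ω₂ ⊆ Ω ∧ lam1 p Ω₁ < α ∧ lam1 p Ω₂ < β := by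
  have hE : 1 < Module.rank ℝ (EuclideanSpace ℝ (Fin N)) := by
    rw [← Module.finrank_eq_rank, finrank_euclideanSpace_fin]
    exact_mod_cast hN
  have hp0 : 0 < p := zero_lt_one.trans hp
  have hu : IsFucikSolution p α β Ω u := ⟨hcont, hC1, hbd, hweak⟩
  have hshape : (∃ R₁, Ω = norm ⁻¹' Iio R₁) ∨ ∃ R₀ R₁, 0 < R₀ ∧ Ω = norm ⁻¹' Ioo R₀ R₁ :=
    hΩ.imp (fun ⟨R₁, _, h⟩ => ⟨R₁, h.trans (by ext; simp)⟩)
      fun ⟨R₀, R₁, h0, _, h⟩ => ⟨R₀, R₁, h0, h.trans (ball_diff_closure_ball_zero h0.ne')⟩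
  obtain ⟨Ω₁, Ω₂, ho₁, ho₂, hd, hs₁, hs₂, h₁, h₂⟩ :=
    hu.admitsDisjointRayleighLT hE hp hshape (fun x y => hrad x y) hpos hneg
  exact ⟨Ω₁, Ω₂, ho₁, ho₂, h₁.nonempty hp0, h₂.nonempty hp0, hd, hs₁, hs₂,
    h₁.lam1_lt hp0 ho₁, h₂.lam1_lt hp0 ho₂⟩
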